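/- Let u be a smooth, rapidly decaying real-valued solution of ∂_t u - (1/5)∂_x^5 u = β ∂_x(u^5) on a time interval. Then the energy E(t) = ∫_ℝ ( (1/2)(∂_x^2 u)² + (5/6) β u^6 ) dx is independent of t. -/

import Mathlib

/-- Partial derivative in time. -/
noncomputable def pt (u : ℝ → ℝ → ℝ) (t x : ℝ) : ℝ := deriv (fun s => u s x) t

/-- `k`-th partial derivative in space. -/
noncomputable def pxk (k : ℕ) (u : ℝ → ℝ → ℝ) (t x : ℝ) : ℝ :=
  iteratedDeriv k (fun y => u t y) x

open MeasureTheory Set Filter Topology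

/-- Continuous functions with quadratic decay. -/
def QD (f : ℝ → ℝ) : Prop := Continuous f ∧ ∃ C : ℝ, ∀ x, |f x| * (1 + x ^ 2) ≤ C

theorem QD.cont {f : ℝ → ℝ} (hf : QD f) : Continuous f := hf.1

theorem QD.nonneg_bound {f : ℝ → ℝ} (hf : QD f) :
    ∃ C : ℝ, 0 ≤ C ∧ ∀ x, |f x| * (1 + x ^ 2) ≤ C := by
  obtain ⟨h, C, hC⟩ := hf
  exact ⟨C, le_trans (by positivity) (hC 0), hC⟩

theorem QD.bdd {f : ℝ → ℝ} (hf : QD f) : ∃ C : ℝ, 0 ≤ C ∧ ∀ x, |f x| ≤ C := by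
  obtain ⟨C, h0, hC⟩ := hf.nonneg_bound
  refine ⟨C, h0, fun x => ?_⟩
  have := hC x
  nlinarith [abs_nonneg (f x), sq_nonneg x, mul_nonneg (abs_nonneg (f x)) (sq_nonneg x)]

theorem QD.add {f g : ℝ → ℝ} (hf : QD f) (hg : QD g) : QD (fun x => f x + g x) := by
  obtain ⟨h, C, hC⟩ := hf
  obtain ⟨h', C', hC'⟩ := hg
  refine ⟨h.add h', C + C', fun x => ?_⟩
  have := abs_add_le (f x) (g x)
  have h1 := hC x
  have h2 := hC' x
  nlinarith [sq_nonneg x]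

theorem QD.bdd_mul {f g : ℝ → ℝ} (hf : Continuous f) (B : ℝ) (hB : ∀ x, |f x| ≤ B)
    (hg : QD g) : QD (fun x => f x * g x) := by
  obtain ⟨h', C', hC'⟩ := hg
  refine ⟨hf.mul h', B * C', fun x => ?_⟩
  rw [abs_mul, mul_assoc]
  exact mul_le_mul (hB x) (hC' x) (by positivity) ((abs_nonneg _).trans (hB x))

theorem QD.mul {f g : ℝ → ℝ} (hf : QD f) (hg : QD g) : QD (fun x => f x * g x) := by
  obtain ⟨C, _, hC⟩ := hf.bdd
  exact QD.bdd_mul hf.cont C hC hg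

theorem QD.const_mul {f : ℝ → ℝ} (c : ℝ) (hf : QD f) : QD (fun x => c * f x) :=
  QD.bdd_mul continuous_const |c| (fun _ => le_rfl) hf

theorem QD.mul_const {f : ℝ → ℝ} (hf : QD f) (c : ℝ) : QD (fun x => f x * c) := by
  simpa [mul_comm] using hf.const_mul c

theorem QD.div_const {f : ℝ → ℝ} (hf : QD f) (c : ℝ) : QD (fun x => f x / c) := by
  simpa [div_eq_mul_inv] using hf.mul_const c⁻¹

theorem QD.neg {f : ℝ → ℝ} (hf : QD f) : QD (fun x => - f x) := by
  simpa using hf.const_mul (-1)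

theorem QD.sub {f g : ℝ → ℝ} (hf : QD f) (hg : QD g) : QD (fun x => f x - g x) := by
  simpa [sub_eq_add_neg] using hf.add hg.neg

theorem QD.pow {f : ℝ → ℝ} (hf : QD f) (n : ℕ) (hn : n ≠ 0) : QD (fun x => f x ^ n) := by
  obtain ⟨m, rfl⟩ := Nat.exists_eq_succ_of_ne_zero hn
  clear hn
  induction m with
  | zero => simpa using hf
  | succ k ih => simpa [pow_succ] using ih.mul hf

theorem QD.abs {f : ℝ → ℝ} (hf : QD f) : QD (fun x => |f x|) := by
  obtain ⟨h, C, hC⟩ := hf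
  exact ⟨h.abs, C, fun x => by simpa using hC x⟩

theorem QD.shift {f : ℝ → ℝ} (hf : QD f) (h : ℝ) : QD (fun x => f (x + h)) := by
  obtain ⟨C, h0, hC⟩ := hf.nonneg_bound
  refine ⟨hf.cont.comp (by fun_prop), C * (2 * (1 + h ^ 2)), fun x => ?_⟩
  have h1 := hC (x + h)
  have h2 : 1 + x ^ 2 ≤ (1 + (x + h) ^ 2) * (2 * (1 + h ^ 2)) := by
    nlinarith [sq_nonneg (x + 2 * h), sq_nonneg ((x + h) * h), sq_nonneg x, sq_nonneg h]
  calc |f (x + h)| * (1 + x ^ 2) ≤ |f (x + h)| * ((1 + (x + h) ^ 2) * (2 * (1 + h ^ 2))) := by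
        gcongr
    _ = (|f (x + h)| * (1 + (x + h) ^ 2)) * (2 * (1 + h ^ 2)) := by ring
    _ ≤ _ := by gcongr

theorem QD.integrable {f : ℝ → ℝ} (hf : QD f) : Integrable f := by
  obtain ⟨h, C, hC⟩ := hf
  refine (integrable_inv_one_add_sq.const_mul C).mono' h.aestronglyMeasurable
    (Eventually.of_forall fun x => ?_)
  have h1 : (0:ℝ) < 1 + x ^ 2 := by positivity
  rw [Real.norm_eq_abs, ← div_eq_mul_inv, le_div_iff₀ h1]
  exact hC x

/-- A jet of a rapidly decaying smooth function. -/
def JT (f : ℕ → ℝ → ℝ) : Prop :=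
  (∀ k, QD (f k)) ∧ ∀ k x, HasDerivAt (f k) (f (k + 1) x) x

theorem int_deriv_zero {P P' : ℝ → ℝ} (hP : QD P) (hP' : QD P')
    (h : ∀ x, HasDerivAt P (P' x) x) : ∫ x, P' x = 0 :=
  integral_eq_zero_of_hasDerivAt_of_integrable h hP'.integrable hP.integrable

/-- Joint smoothness of partial derivatives. -/
theorem joint_smooth (u : ℝ → ℝ → ℝ) (hu : ContDiff ℝ (⊤ : ℕ∞) (Function.uncurry u)) (k : ℕ) :
    ContDiff ℝ (⊤ : ℕ∞) (Function.uncurry fun t x => iteratedDeriv k (fun y => u t y) x) := by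
  induction k with
  | zero => simpa using hu
  | succ k ih =>
    simp only [iteratedDeriv_succ]
    have hd : ∀ p : ℝ × ℝ, Function.uncurry (fun t x => deriv (iteratedDeriv k (fun y => u t y)) x) p
        = fderiv ℝ (Function.uncurry fun t x => iteratedDeriv k (fun y => u t y) x) p (0, 1) := by
      rintro ⟨t, x⟩
      have h1 := (ih.differentiable (by simp) (t, x)).hasFDerivAt
      have h2 : HasDerivAt (fun y : ℝ => (t, y)) ((0 : ℝ), (1 : ℝ)) x :=
        (hasDerivAt_const x t).prodMk (hasDerivAt_id x)
      exact (h1.comp_hasDerivAt x h2).deriv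
    rw [show (Function.uncurry (fun t x => deriv (iteratedDeriv k (fun y => u t y)) x)) = _ from
      funext hd]
    exact (ih.fderiv_right (m := (⊤ : ℕ∞)) (by simp)).clm_apply contDiff_const

/-- The setting. -/
structure Sett (β a b : ℝ) (U : ℝ → ℕ → ℝ → ℝ) : Prop where
  cont : ∀ k, Continuous (Function.uncurry fun t x => U t k x)
  jt : ∀ t ∈ Icc a b, JT (U t)
  eq : ∀ t ∈ Icc a b, ∀ x, HasDerivAt (fun s => U s 0 x)
    (U t 5 x / 5 + β * (5 * U t 0 x ^ 4 * U t 1 x)) t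

theorem sett_of (β a b : ℝ) (u : ℝ → ℝ → ℝ)
    (hu : ContDiff ℝ (⊤ : ℕ∞) (Function.uncurry u))
    (hdecay : ∀ t ∈ Set.Icc a b, ∀ k n : ℕ, ∃ C : ℝ, ∀ x : ℝ,
      |x| ^ n * |iteratedDeriv k (fun y => u t y) x| ≤ C)
    (heq : ∀ t ∈ Set.Icc a b, ∀ x : ℝ,
      pt u t x - (1/5) * pxk 5 u t x = β * deriv (fun y => (u t y) ^ 5) x) :
    Sett β a b (fun t k x => iteratedDeriv k (fun y => u t y) x) := by
  have hD : ∀ t k x, HasDerivAt (fun x => iteratedDeriv k (fun y => u t y) x)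
      (iteratedDeriv (k + 1) (fun y => u t y) x) x := by
    intro t k x
    rw [iteratedDeriv_succ]
    have h1 := (joint_smooth u hu k).differentiable (by simp)
    have h2 : Differentiable ℝ (fun x => iteratedDeriv k (fun y => u t y) x) :=
      h1.comp (g := (Function.uncurry fun t x => iteratedDeriv k (fun y => u t y) x))
        (f := fun x => (t, x)) (by fun_prop)
    exact (h2 x).hasDerivAt
  refine ⟨fun k => (joint_smooth u hu k).continuous, fun t ht => ⟨fun k => ⟨?_, ?_⟩, hD t⟩, ?_⟩
  · exact continuous_iff_continuousAt.2 fun x => (hD t k x).continuousAt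
  · obtain ⟨C0, h0⟩ := hdecay t ht k 0
    obtain ⟨C2, h2⟩ := hdecay t ht k 2
    refine ⟨C0 + C2, fun x => ?_⟩
    have e0 := h0 x
    have e2 := h2 x
    rw [sq_abs] at e2
    simp only [pow_zero, one_mul] at e0
    nlinarith
  · intro t ht x
    have h1 : Differentiable ℝ (fun s => u s x) :=
      (hu.differentiable (by simp)).comp (g := Function.uncurry u)
        (f := fun s => (s, x)) (by fun_prop)
    have h2 := (h1 t).hasDerivAt
    have h3 := heq t ht x
    have h4 := ((hD t 0 x).pow 5).deriv
    simp only [iteratedDeriv_zero] at h4 ⊢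
    have h5 : deriv (fun y => (u t y) ^ 5) x =
      5 * u t x ^ 4 * iteratedDeriv 1 (fun y => u t y) x := by
      rw [← Pi.pow_def]; simpa using h4
    rw [h5] at h3
    unfold pt pxk at h3
    refine h2.congr_deriv ?_
    linarith

theorem int_parts {P A R : ℝ → ℝ} (hP : QD P) (hA : QD A) (hR : QD R)
    (h : ∀ x, HasDerivAt P (A x + R x) x) : ∫ x, A x = - ∫ x, R x := by
  have h1 := int_deriv_zero hP (hA.add hR) h
  rw [integral_add hA.integrable hR.integrable] at h1
  linarith

theorem int_bound {R S : ℝ → ℝ} (hR : QD R) (hS : QD S) (C : ℝ) (h : ∀ x, |R x| ≤ C * S x) :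
    |∫ x, R x| ≤ C * ∫ x, S x := by
  rw [← integral_const_mul]
  refine (abs_integral_le_integral_abs).trans ?_
  exact integral_mono hR.abs.integrable (hS.const_mul C).integrable h

theorem QD.sq_sum {f g h : ℝ → ℝ} (hf : QD f) (hg : QD g) (hh : QD h) :
    QD (fun x => f x ^ 2 + g x ^ 2 + h x ^ 2) :=
  ((hf.pow 2 (by norm_num)).add (hg.pow 2 (by norm_num))).add (hh.pow 2 (by norm_num))

/-- Bounded cutoff jets. -/
def Cut (B : ℝ) (X : ℕ → ℝ → ℝ) : Prop :=
  (∀ j x, HasDerivAt (X j) (X (j + 1) x) x) ∧ ∀ j ≤ 3, ∀ x, |X j x| ≤ B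

theorem Cut.mul {B : ℝ} {X : ℕ → ℝ → ℝ} (hX : Cut B X) (j : ℕ) (hj : j ≤ 3) {g : ℝ → ℝ}
    (hg : QD g) : QD (fun x => X j x * g x) :=
  QD.bdd_mul (continuous_iff_continuousAt.2 fun x => (hX.1 j x).continuousAt) B (hX.2 j hj) hg

theorem b1 {f X : ℕ → ℝ → ℝ} {B : ℝ} (hf : JT f) (hX : Cut B X) :
    |∫ x, X 0 x * (f 0 x * f 5 x)| ≤ 5 * B * ∫ x, (f 0 x ^ 2 + f 1 x ^ 2 + f 2 x ^ 2) := by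
  have q := hf.1
  have hA : QD (fun x => X 0 x * (f 0 x * f 5 x)) := hX.mul 0 (by norm_num) ((q 0).mul (q 5))
  have hR : QD (fun x => X 1 x * (5 / 2 * f 2 x ^ 2) + X 2 x * (3 * (f 1 x * f 2 x))
      + X 3 x * (f 0 x * f 2 x)) :=
    ((hX.mul 1 (by norm_num) (((q 2).pow 2 (by norm_num)).const_mul _)).add
      (hX.mul 2 (by norm_num) (((q 1).mul (q 2)).const_mul _))).add
      (hX.mul 3 (by norm_num) ((q 0).mul (q 2)))
  have hP : QD (fun x => X 0 x * (f 0 x * f 4 x) - X 1 x * (f 0 x * f 3 x)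
      - X 0 x * (f 1 x * f 3 x) + X 0 x * (1 / 2 * f 2 x ^ 2) + X 1 x * (2 * (f 1 x * f 2 x))
      + X 2 x * (f 0 x * f 2 x)) :=
    (((((hX.mul 0 (by norm_num) ((q 0).mul (q 4))).sub
      (hX.mul 1 (by norm_num) ((q 0).mul (q 3)))).sub
      (hX.mul 0 (by norm_num) ((q 1).mul (q 3)))).add
      (hX.mul 0 (by norm_num) (((q 2).pow 2 (by norm_num)).const_mul _))).add
      (hX.mul 1 (by norm_num) (((q 1).mul (q 2)).const_mul _))).add
      (hX.mul 2 (by norm_num) ((q 0).mul (q 2)))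
  have key := int_parts hP hA hR (fun x => by
    have d := fun k => hf.2 k x
    have e := fun k => hX.1 k x
    refine HasDerivAt.congr_deriv
      (((((((e 0).mul ((d 0).mul (d 4))).sub ((e 1).mul ((d 0).mul (d 3)))).sub
      ((e 0).mul ((d 1).mul (d 3)))).add
      ((e 0).mul (((d 2).pow 2).const_mul _))).add
      ((e 1).mul (((d 1).mul (d 2)).const_mul _))).add
      ((e 2).mul ((d 0).mul (d 2)))) ?_
    simp
    ring)
  rw [key, abs_neg]
  refine int_bound hR ((q 0).sq_sum (q 1) (q 2)) (5 * B) (fun x => ?_)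
  have hB : 0 ≤ B := (abs_nonneg _).trans (hX.2 0 (by norm_num) 0)
  have t1 : |X 1 x * (5 / 2 * f 2 x ^ 2)| ≤ B * (5 / 2 * f 2 x ^ 2) := by
    rw [abs_mul, abs_of_nonneg (show 0 ≤ 5 / 2 * f 2 x ^ 2 by positivity)]
    exact mul_le_mul_of_nonneg_right (hX.2 1 (by norm_num) x) (by positivity)
  have t2 : |X 2 x * (3 * (f 1 x * f 2 x))| ≤ B * (3 / 2 * (f 1 x ^ 2 + f 2 x ^ 2)) := by
    rw [abs_mul]
    refine mul_le_mul (hX.2 2 (by norm_num) x) ?_ (abs_nonneg _) hB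
    rw [abs_le]; constructor <;> nlinarith [sq_nonneg (f 1 x + f 2 x), sq_nonneg (f 1 x - f 2 x)]
  have t3 : |X 3 x * (f 0 x * f 2 x)| ≤ B * (1 / 2 * (f 0 x ^ 2 + f 2 x ^ 2)) := by
    rw [abs_mul]
    refine mul_le_mul (hX.2 3 (by norm_num) x) ?_ (abs_nonneg _) hB
    rw [abs_le]; constructor <;> nlinarith [sq_nonneg (f 0 x + f 2 x), sq_nonneg (f 0 x - f 2 x)]
  refine (abs_add_three _ _ _).trans ?_
  have := mul_nonneg hB (sq_nonneg (f 0 x))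
  have := mul_nonneg hB (sq_nonneg (f 1 x))
  have := mul_nonneg hB (sq_nonneg (f 2 x))
  linarith

theorem term_bound {c p M S n : ℝ} (hn : 0 ≤ n) (hc : |c| ≤ M) (hp : |p| ≤ S) :
    |n * (c * p)| ≤ n * (M * S) := by
  rw [abs_mul, abs_mul, abs_of_nonneg hn]
  have := (abs_nonneg _).trans hc
  gcongr

theorem prod_le (a b c : ℝ) : |a * c| ≤ a ^ 2 + b ^ 2 + c ^ 2 := by
  rw [abs_le]; constructor <;> nlinarith [sq_nonneg (a + c), sq_nonneg (a - c), sq_nonneg b]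

theorem b2 {f X : ℕ → ℝ → ℝ} {B K : ℝ} (hf : JT f) (hX : Cut B X)
    (h0 : ∀ x, |f 0 x| ≤ K) (h1 : ∀ x, |f 1 x| ≤ K) :
    |∫ x, X 0 x * (f 0 x ^ 5 * f 5 x)| ≤
      300 * (B * K ^ 4) * ∫ x, (f 0 x ^ 2 + f 1 x ^ 2 + f 2 x ^ 2) := by
  have q := hf.1
  have n4 : (4 : ℕ) ≠ 0 := by norm_num
  have n3 : (3 : ℕ) ≠ 0 := by norm_num
  have n2 : (2 : ℕ) ≠ 0 := by norm_num
  have n5 : (5 : ℕ) ≠ 0 := by norm_num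
  have m0 : 0 ≤ 3 := by norm_num
  have m1 : 1 ≤ 3 := by norm_num
  have m2 : 2 ≤ 3 := by norm_num
  have m3 : 3 ≤ 3 := by norm_num
  have hA : QD (fun x => X 0 x * (f 0 x ^ 5 * f 5 x)) :=
    hX.mul 0 m0 (((q 0).pow 5 n5).mul (q 5))
  have hR : QD (fun x => 1 * (X 3 x * f 0 x ^ 4 * (f 0 x * f 2 x))
      + 15 * (X 2 x * f 0 x ^ 4 * (f 1 x * f 2 x))
      + 60 * (X 1 x * (f 0 x ^ 3 * f 1 x) * (f 1 x * f 2 x))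
      + 25 / 2 * (X 1 x * f 0 x ^ 4 * (f 2 x * f 2 x))
      + 60 * (X 0 x * (f 0 x ^ 2 * f 1 x ^ 2) * (f 1 x * f 2 x))
      + 50 * (X 0 x * (f 0 x ^ 3 * f 1 x) * (f 2 x * f 2 x))) := by
    repeat' first
      | exact q _
      | exact n2
      | exact n3
      | exact n4
      | exact m0
      | exact m1
      | exact m2
      | exact m3
      | apply QD.add
      | apply QD.const_mul
      | apply Cut.mul hX
      | apply QD.mul
      | apply QD.pow
  have hP : QD (fun x => X 0 x * (f 0 x ^ 5 * f 4 x) - (X 1 x * (f 0 x ^ 5 * f 3 x)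
      + X 0 x * (5 * (f 0 x ^ 4 * f 1 x * f 3 x))) + (X 2 x * (f 0 x ^ 5 * f 2 x)
      + X 1 x * (10 * (f 0 x ^ 4 * f 1 x * f 2 x))
      + X 0 x * (20 * (f 0 x ^ 3 * f 1 x ^ 2 * f 2 x))
      + X 0 x * (5 * (f 0 x ^ 4 * f 2 x ^ 2)))
      - X 0 x * (5 / 2 * (f 0 x ^ 4 * f 2 x ^ 2))) := by
    repeat' first
      | exact q _
      | exact n2
      | exact n3
      | exact n4
      | exact n5
      | exact m0
      | exact m1
      | exact m2
      | exact m3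
      | apply QD.sub
      | apply QD.add
      | apply QD.const_mul
      | apply Cut.mul hX
      | apply QD.mul
      | apply QD.pow
  have key := int_parts hP hA hR (fun x => by
    have d := fun k => hf.2 k x
    have e := fun k => hX.1 k x
    refine HasDerivAt.congr_deriv
      (((((e 0).mul (((d 0).pow 5).mul (d 4))).sub (((e 1).mul (((d 0).pow 5).mul (d 3))).add
      ((e 0).mul (((((d 0).pow 4).mul (d 1)).mul (d 3)).const_mul 5)))).add
      (((((e 2).mul (((d 0).pow 5).mul (d 2))).add
      ((e 1).mul (((((d 0).pow 4).mul (d 1)).mul (d 2)).const_mul 10))).add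
      ((e 0).mul (((((d 0).pow 3).mul ((d 1).pow 2)).mul (d 2)).const_mul 20))).add
      ((e 0).mul ((((d 0).pow 4).mul ((d 2).pow 2)).const_mul 5)))).sub
      ((e 0).mul ((((d 0).pow 4).mul ((d 2).pow 2)).const_mul (5 / 2)))) ?_
    simp
    ring)
  rw [key, abs_neg]
  have hB : 0 ≤ B := (abs_nonneg _).trans (hX.2 0 (by norm_num) 0)
  have hK : 0 ≤ K := (abs_nonneg _).trans (h0 0)
  refine int_bound hR ((q 0).sq_sum (q 1) (q 2)) _ (fun x => ?_)
  have a4 : ∀ j ≤ 3, |X j x * f 0 x ^ 4| ≤ B * K ^ 4 := by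
    intro j hj
    rw [abs_mul, abs_pow]
    exact mul_le_mul (hX.2 j hj x) (pow_le_pow_left₀ (abs_nonneg _) (h0 x) 4) (by positivity) hB
  have a31 : ∀ j ≤ 3, |X j x * (f 0 x ^ 3 * f 1 x)| ≤ B * K ^ 4 := by
    intro j hj
    rw [abs_mul, abs_mul, abs_pow, pow_succ K 3]
    exact mul_le_mul (hX.2 j hj x) (mul_le_mul (pow_le_pow_left₀ (abs_nonneg _) (h0 x) 3) (h1 x)
      (abs_nonneg _) (by positivity)) (by positivity) hB
  have a22 : ∀ j ≤ 3, |X j x * (f 0 x ^ 2 * f 1 x ^ 2)| ≤ B * K ^ 4 := by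
    intro j hj
    rw [abs_mul, abs_mul, abs_pow, abs_pow, show K ^ 4 = K ^ 2 * K ^ 2 by ring]
    exact mul_le_mul (hX.2 j hj x) (mul_le_mul (pow_le_pow_left₀ (abs_nonneg _) (h0 x) 2)
      (pow_le_pow_left₀ (abs_nonneg _) (h1 x) 2)
      (by positivity) (by positivity)) (by positivity) hB
  set S := f 0 x ^ 2 + f 1 x ^ 2 + f 2 x ^ 2 with hS
  have p02 : |f 0 x * f 2 x| ≤ S := prod_le _ _ _
  have p12 : |f 1 x * f 2 x| ≤ S := by
    have := prod_le (f 1 x) (f 0 x) (f 2 x); rw [hS]; linarith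
  have p22 : |f 2 x * f 2 x| ≤ S := by
    rw [abs_of_nonneg (mul_self_nonneg _), hS]; nlinarith [sq_nonneg (f 0 x), sq_nonneg (f 1 x)]
  have hS0 : 0 ≤ S := by positivity
  have T1 := term_bound (n := 1) (by norm_num) (a4 3 m3) p02
  have T2 := term_bound (n := 15) (by norm_num) (a4 2 m2) p12
  have T3 := term_bound (n := 60) (by norm_num) (a31 1 m1) p12
  have T4 := term_bound (n := 25 / 2) (by norm_num) (a4 1 m1) p22
  have T5 := term_bound (n := 60) (by norm_num) (a22 0 m0) p12
  have T6 := term_bound (n := 50) (by norm_num) (a31 0 m0) p22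
  have T0 : 0 ≤ B * K ^ 4 * S := by positivity
  refine (abs_add_le _ _).trans ?_
  refine (add_le_add_left (abs_add_le _ _) _).trans ?_
  refine (add_le_add_left (add_le_add_left (abs_add_le _ _) _) _).trans ?_
  refine (add_le_add_left (add_le_add_left (add_le_add_left (abs_add_three _ _ _) _) _) _).trans ?_
  linarith

theorem sup_bound {f : ℕ → ℝ → ℝ} (hf : JT f) (k : ℕ) (μ : ℝ) (hμ : 0 < μ) (x : ℝ) :
    f k x ^ 2 ≤ μ * (∫ y, f k y ^ 2) + μ⁻¹ * ∫ y, f (k + 1) y ^ 2 := by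
  have q := hf.1
  have q1 : QD (fun y => 2 * (f k y * f (k + 1) y)) := ((q k).mul (q (k+1))).const_mul 2
  have q2 : QD (fun y => f k y ^ 2) := (q k).pow 2 (by norm_num)
  have q3 : QD (fun y => f (k+1) y ^ 2) := (q (k+1)).pow 2 (by norm_num)
  have hd : ∀ y, HasDerivAt (fun y => f k y ^ 2) (2 * (f k y * f (k + 1) y)) y := by
    intro y
    refine ((hf.2 k y).pow 2).congr_deriv ?_
    simp; ring
  have hlim := tendsto_zero_of_hasDerivAt_of_integrableOn_Iic (a := x) (fun y _ => hd y)
    q1.integrable.integrableOn q2.integrable.integrableOn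
  have h1 := integral_Iic_of_hasDerivAt_of_tendsto' (a := x) (fun y _ => hd y)
    q1.integrable.integrableOn hlim
  rw [sub_zero] at h1
  rw [← h1, ← integral_const_mul, ← integral_const_mul,
    ← integral_add (q2.const_mul _).integrable (q3.const_mul _).integrable]
  have hle : ∀ y, 2 * (f k y * f (k + 1) y) ≤ μ * f k y ^ 2 + μ⁻¹ * f (k + 1) y ^ 2 := by
    intro y
    have : μ * f k y ^ 2 + μ⁻¹ * f (k + 1) y ^ 2 - 2 * (f k y * f (k + 1) y)
      = μ⁻¹ * (μ * f k y - f (k + 1) y) ^ 2 := by field_simp; ring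
    have h2 : 0 ≤ μ⁻¹ * (μ * f k y - f (k + 1) y) ^ 2 := by positivity
    linarith
  have hi := ((q2.const_mul μ).add (q3.const_mul μ⁻¹)).integrable
  calc _ ≤ ∫ y in Iic x, (μ * f k y ^ 2 + μ⁻¹ * f (k + 1) y ^ 2) :=
        setIntegral_mono q1.integrable.integrableOn hi.integrableOn hle
    _ ≤ _ := setIntegral_le_integral hi (Eventually.of_forall fun y => by positivity)

theorem sq_int {f : ℕ → ℝ → ℝ} (hf : JT f) (k : ℕ) : Integrable (fun x => f k x ^ 2) :=
  ((hf.1 k).pow 2 (by norm_num)).integrable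

theorem split3 {f : ℕ → ℝ → ℝ} (hf : JT f) : ∫ x, (f 0 x ^ 2 + f 1 x ^ 2 + f 2 x ^ 2) =
    (∫ x, f 0 x ^ 2) + (∫ x, f 1 x ^ 2) + ∫ x, f 2 x ^ 2 := by
  have p := fun k => (hf.1 k).pow 2 (by norm_num)
  rw [integral_add ((p 0).add (p 1)).integrable (sq_int hf 2),
    integral_add (sq_int hf 0) (sq_int hf 1)]

theorem sup01 {f : ℕ → ℝ → ℝ} (hf : JT f) {K : ℝ}
    (hK : ∫ x, (f 0 x ^ 2 + f 1 x ^ 2 + f 2 x ^ 2) ≤ K) (x : ℝ) :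
    f 0 x ^ 2 ≤ K ∧ f 1 x ^ 2 ≤ K := by
  rw [split3 hf] at hK
  have h0 := sup_bound hf 0 1 one_pos x
  have h1 := sup_bound hf 1 1 one_pos x
  have p : ∀ k, 0 ≤ ∫ x, f k x ^ 2 := fun k => integral_nonneg fun x => sq_nonneg _
  norm_num at h0 h1
  constructor <;> linarith [p 0, p 1, p 2]

theorem interp {f : ℕ → ℝ → ℝ} (hf : JT f) :
    (∫ x, f 1 x ^ 2) ^ 2 ≤ (∫ x, f 0 x ^ 2) * ∫ x, f 2 x ^ 2 := by
  have q := hf.1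
  have h1 : ∫ x, f 0 x * f 2 x = - ∫ x, f 1 x ^ 2 :=
    int_parts ((q 0).mul (q 1)) ((q 0).mul (q 2)) ((q 1).pow 2 (by norm_num)) (fun x => by
      refine ((hf.2 0 x).mul (hf.2 1 x)).congr_deriv ?_
      simp; ring)
  have h2 : ∀ s : ℝ, 0 ≤ (∫ x, f 0 x ^ 2) * (s * s) + (-2 * ∫ x, f 1 x ^ 2) * s
      + ∫ x, f 2 x ^ 2 := by
    intro s
    have h3 : 0 ≤ ∫ x, (f 2 x + s * f 0 x) ^ 2 := integral_nonneg fun x => sq_nonneg _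
    have h4 : ∫ x, (f 2 x + s * f 0 x) ^ 2 = ∫ x, (f 2 x ^ 2 + 2 * s * (f 0 x * f 2 x)
        + s ^ 2 * f 0 x ^ 2) := by congr 1; ext x; ring
    rw [h4, integral_add ((((q 2).pow 2 (by norm_num)).add (((q 0).mul (q 2)).const_mul (2 * s))).integrable)
      ((sq_int hf 0).const_mul _),
      integral_add (sq_int hf 2) (((q 0).mul (q 2)).integrable.const_mul _),
      integral_const_mul, integral_const_mul, h1] at h3
    linarith
  have h3 := discrim_le_zero h2
  unfold discrim at h3
  linarith

theorem gn (β M0 E0 : ℝ) : ∃ C : ℝ, ∀ f : ℕ → ℝ → ℝ, JT f → ∫ x, f 0 x ^ 2 ≤ M0 →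
    ∫ x, (1 / 2 * f 2 x ^ 2 + 5 / 6 * β * f 0 x ^ 6) ≤ E0 →
    ∫ x, (f 0 x ^ 2 + f 1 x ^ 2 + f 2 x ^ 2) ≤ C := by
  set μ : ℝ := 20 * (1 + |β|) * (1 + |M0|) with hμd
  set C1 : ℝ := 4 * |E0| + 20 / 3 * |β| * μ ^ 2 * |M0| ^ 3 with hC1
  refine ⟨3 / 2 * (M0 + C1), fun f hf hM hE => ?_⟩
  have q := hf.1
  have hμ : 0 < μ := by positivity
  rw [split3 hf]
  have hA := interp hf
  have p : ∀ k, 0 ≤ ∫ x, f k x ^ 2 := fun k => integral_nonneg fun x => sq_nonneg _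
  have hs := sup_bound hf 0 μ hμ
  have q6 : QD (fun x => f 0 x ^ 6) := (q 0).pow 6 (by norm_num)
  rw [integral_add ((sq_int hf 2).const_mul _) (q6.integrable.const_mul _), integral_const_mul,
    integral_const_mul] at hE
  set M := ∫ x, f 0 x ^ 2
  set A := ∫ x, f 1 x ^ 2
  set D := ∫ x, f 2 x ^ 2
  have hM0 : 0 ≤ M := p 0
  have hA0 : 0 ≤ A := p 1
  have hD0 : 0 ≤ D := p 2
  have hMM : |M0| = M0 := abs_of_nonneg (hM0.trans hM)
  have h6 : ∫ x, f 0 x ^ 6 ≤ (2 * μ ^ 2 * M ^ 2 + 2 * μ⁻¹ ^ 2 * (M * D)) * M := by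
    have : ∫ x, f 0 x ^ 6 ≤ ∫ x, (2 * μ ^ 2 * M ^ 2 + 2 * μ⁻¹ ^ 2 * (M * D)) * f 0 x ^ 2 := by
      refine integral_mono q6.integrable ((sq_int hf 0).const_mul _) (fun x => ?_)
      have h1 : f 0 x ^ 2 ≤ μ * M + μ⁻¹ * A := hs x
      have h2 : (f 0 x ^ 2) ^ 2 ≤ (μ * M + μ⁻¹ * A) ^ 2 :=
        pow_le_pow_left₀ (sq_nonneg _) h1 2
      have h3 : (μ * M + μ⁻¹ * A) ^ 2 ≤ 2 * μ ^ 2 * M ^ 2 + 2 * μ⁻¹ ^ 2 * A ^ 2 := by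
        nlinarith [sq_nonneg (μ * M - μ⁻¹ * A)]
      have h4 : 2 * μ⁻¹ ^ 2 * A ^ 2 ≤ 2 * μ⁻¹ ^ 2 * (M * D) := by gcongr
      calc f 0 x ^ 6 = (f 0 x ^ 2) ^ 2 * f 0 x ^ 2 := by ring
        _ ≤ _ := by gcongr; linarith
    rwa [integral_const_mul] at this
  have h60 : 0 ≤ ∫ x, f 0 x ^ 6 := integral_nonneg fun x => by positivity
  have h7 : -(|β| * ∫ x, f 0 x ^ 6) ≤ β * ∫ x, f 0 x ^ 6 := by
    have := mul_le_mul_of_nonneg_right (neg_abs_le β) h60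
    linarith
  have hm : M ≤ |M0| := hM.trans (le_abs_self _)
  have h8 : |β| * ∫ x, f 0 x ^ 6 ≤ 2 * |β| * μ ^ 2 * |M0| ^ 3 + 2 * |β| * μ⁻¹ ^ 2 * M ^ 2 * D := by
    calc |β| * ∫ x, f 0 x ^ 6 ≤ |β| * ((2 * μ ^ 2 * M ^ 2 + 2 * μ⁻¹ ^ 2 * (M * D)) * M) := by
          gcongr
      _ = 2 * |β| * μ ^ 2 * M ^ 3 + 2 * |β| * μ⁻¹ ^ 2 * M ^ 2 * D := by ring
      _ ≤ _ := by gcongr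
  have h9 : 2 * |β| * μ⁻¹ ^ 2 * M ^ 2 ≤ 3 / 10 := by
    have : 2 * |β| * M ^ 2 ≤ 3 / 10 * μ ^ 2 := by
      have e1 : M ^ 2 ≤ (1 + |M0|) ^ 2 := by gcongr; linarith
      have e2 : |β| ≤ (1 + |β|) ^ 2 := by nlinarith [abs_nonneg β]
      calc 2 * |β| * M ^ 2 ≤ 2 * (1 + |β|) ^ 2 * (1 + |M0|) ^ 2 := by gcongr
        _ ≤ 3 / 10 * μ ^ 2 := by
          have : 0 ≤ (1 + |β|) ^ 2 * (1 + |M0|) ^ 2 := by positivity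
          rw [hμd]; linarith
    calc 2 * |β| * μ⁻¹ ^ 2 * M ^ 2 = (2 * |β| * M ^ 2) / μ ^ 2 := by field_simp
      _ ≤ 3 / 10 := by rw [div_le_iff₀ (by positivity)]; exact this
  have h10 := mul_le_mul_of_nonneg_right h9 hD0
  have h11 : D ≤ C1 := by
    have := le_abs_self E0
    rw [hC1]; linarith
  have h12 : A ≤ (M + D) / 2 := by
    refine abs_le_of_sq_le_sq' (?_ : A ^ 2 ≤ ((M + D) / 2) ^ 2) (by positivity) |>.2
    nlinarith [sq_nonneg (M - D)]
  linarith

theorem gn' (β K : ℝ) : ∃ C : ℝ, ∀ f g : ℕ → ℝ → ℝ, JT f → JT g →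
    ∫ x, (g 0 x ^ 2 + g 1 x ^ 2 + g 2 x ^ 2) ≤ K → ∫ x, f 0 x ^ 2 = ∫ x, g 0 x ^ 2 →
    ∫ x, (1 / 2 * f 2 x ^ 2 + 5 / 6 * β * f 0 x ^ 6) =
      ∫ x, (1 / 2 * g 2 x ^ 2 + 5 / 6 * β * g 0 x ^ 6) →
    ∫ x, (f 0 x ^ 2 + f 1 x ^ 2 + f 2 x ^ 2) ≤ C := by
  obtain ⟨C, hC⟩ := gn β K (1 / 2 * K + 5 / 6 * |β| * K ^ 3)
  refine ⟨C, fun f g hf hg hK hM hE => hC f hf ?_ ?_⟩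
  all_goals
    have hs := sup01 hg hK
    rw [split3 hg] at hK
    have p : ∀ k, 0 ≤ ∫ x, g k x ^ 2 := fun k => integral_nonneg fun x => sq_nonneg _
  · rw [hM]; linarith [p 1, p 2]
  · rw [hE]
    have q6 : QD (fun x => g 0 x ^ 6) := (hg.1 0).pow 6 (by norm_num)
    rw [integral_add ((sq_int hg 2).const_mul _) (q6.integrable.const_mul _), integral_const_mul,
      integral_const_mul]
    have h6 : ∫ x, g 0 x ^ 6 ≤ K ^ 2 * ∫ x, g 0 x ^ 2 := by
      rw [← integral_const_mul]
      refine integral_mono q6.integrable ((sq_int hg 0).const_mul _) (fun x => ?_)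
      have := pow_le_pow_left₀ (sq_nonneg _) (hs x).1 2
      calc g 0 x ^ 6 = (g 0 x ^ 2) ^ 2 * g 0 x ^ 2 := by ring
        _ ≤ _ := by gcongr
    have h60 : 0 ≤ ∫ x, g 0 x ^ 6 := integral_nonneg fun x => by positivity
    have h7 : β * ∫ x, g 0 x ^ 6 ≤ |β| * ∫ x, g 0 x ^ 6 := by gcongr; exact le_abs_self _
    have h8 : K ^ 2 * ∫ x, g 0 x ^ 2 ≤ K ^ 3 := by
      rw [pow_succ K 2]; gcongr; linarith [p 1, p 2]
    have h9 : |β| * ∫ x, g 0 x ^ 6 ≤ |β| * K ^ 3 := by gcongr; linarith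
    linarith [p 0, p 1]

theorem final_id {f : ℕ → ℝ → ℝ} (hf : JT f) :
    ∫ x, f 0 x ^ 5 * f 5 x = - ∫ x, f 2 x * (60 * (f 0 x ^ 2 * f 1 x ^ 3)
      + 60 * (f 0 x ^ 3 * f 1 x * f 2 x) + 5 * (f 0 x ^ 4 * f 3 x)) := by
  have q := hf.1
  have n4 : (4 : ℕ) ≠ 0 := by norm_num
  have n3 : (3 : ℕ) ≠ 0 := by norm_num
  have n2 : (2 : ℕ) ≠ 0 := by norm_num
  have n5 : (5 : ℕ) ≠ 0 := by norm_num
  have hP : QD (fun x => f 0 x ^ 5 * f 4 x - 5 * (f 0 x ^ 4 * f 1 x * f 3 x)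
      + (20 * (f 0 x ^ 3 * f 1 x ^ 2 * f 2 x) + 5 * (f 0 x ^ 4 * f 2 x ^ 2))) := by
    repeat' first
      | exact q _
      | exact n2
      | exact n3
      | exact n4
      | exact n5
      | apply QD.sub
      | apply QD.add
      | apply QD.const_mul
      | apply QD.mul
      | apply QD.pow
  refine int_parts hP ?_ ?_ (fun x => ?_)
  · exact ((q 0).pow 5 n5).mul (q 5)
  · repeat' first
      | exact q _
      | exact n2
      | exact n3
      | exact n4
      | exact n5
      | apply QD.sub
      | apply QD.add
      | apply QD.const_mul
      | apply QD.mul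
      | apply QD.pow
  · have d := fun k => hf.2 k x
    refine HasDerivAt.congr_deriv
      (((((d 0).pow 5).mul (d 4)).sub ((((((d 0).pow 4).mul (d 1)).mul (d 3)).const_mul 5))).add
      (((((((d 0).pow 3).mul ((d 1).pow 2)).mul (d 2)).const_mul 20)).add
      (((((d 0).pow 4).mul ((d 2).pow 2)).const_mul 5)))) ?_
    simp
    ring

theorem quintic_zero {f : ℕ → ℝ → ℝ} (hf : JT f) (n : ℕ) (hn : n ≠ 0) :
    ∫ x, f 0 x ^ n * f 1 x = 0 := by
  have q := hf.1
  refine int_deriv_zero (P := fun x => 1 / (n + 1 : ℝ) * f 0 x ^ (n + 1))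
    (((q 0).pow (n + 1) (by norm_num)).const_mul _) (((q 0).pow n hn).mul (q 1)) (fun x => ?_)
  refine (((hf.2 0 x).pow (n + 1)).const_mul (1 / (n + 1 : ℝ))).congr_deriv ?_
  have : (n + 1 : ℝ) ≠ 0 := by positivity
  simp
  field_simp

theorem cut_exists : ∃ (B : ℝ) (ψ : ℕ → ℕ → ℝ → ℝ), ∀ n, Cut B (ψ n) ∧
    (∀ x : ℝ, |x| ≤ n → ψ n 0 x = 1) ∧ (∀ x : ℝ, 2 * (n + 1 : ℝ) ≤ |x| → ψ n 0 x = 0) := by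
  let b : ContDiffBump (0 : ℝ) := ⟨1, 2, one_pos, one_lt_two⟩
  have hb : ContDiff ℝ (⊤ : ℕ∞) (b : ℝ → ℝ) := b.contDiff
  have hbd : ∀ j : ℕ, ∃ C, ∀ x, |iteratedDeriv j b x| ≤ C := by
    intro j
    have h1 : HasCompactSupport (iteratedDeriv j b) := by
      induction j with
      | zero => simpa using b.hasCompactSupport
      | succ k ih => rw [iteratedDeriv_succ]; exact ih.deriv
    have h2 : Continuous (iteratedDeriv j b) := hb.continuous_iteratedDeriv j (by exact_mod_cast le_top)
    exact h1.exists_bound_of_continuous h2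
  choose C hC using hbd
  have hC0 : ∀ j, 0 ≤ C j := fun j => (abs_nonneg _).trans (hC j 0)
  refine ⟨C 0 + C 1 + C 2 + C 3,
    fun n j x => iteratedDeriv j b (x / (n + 1)) / (n + 1 : ℝ) ^ j, fun n => ⟨⟨?_, ?_⟩, ?_, ?_⟩⟩
  · intro j x
    have h1 : HasDerivAt (iteratedDeriv j b) (iteratedDeriv (j + 1) b (x / (n + 1)))
        (x / (n + 1)) := by
      rw [iteratedDeriv_succ]
      exact (hb.differentiable_iteratedDeriv j (by exact_mod_cast WithTop.coe_lt_top j) _).hasDerivAt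
    have h2 : HasDerivAt (fun x : ℝ => x / (n + 1 : ℝ)) (1 / (n + 1 : ℝ)) x :=
      (hasDerivAt_id x).div_const _
    refine ((h1.comp x h2).div_const _).congr_deriv ?_
    have : (n + 1 : ℝ) ≠ 0 := by positivity
    field_simp
    ring
  · intro j hj x
    rw [abs_div]
    have h1 : 1 ≤ |(n + 1 : ℝ) ^ j| := by
      rw [abs_of_nonneg (by positivity)]
      exact one_le_pow₀ (by linarith [Nat.cast_nonneg (α := ℝ) n])
    refine (div_le_self (abs_nonneg _) h1).trans ((hC j _).trans ?_)
    interval_cases j <;> linarith [hC0 0, hC0 1, hC0 2, hC0 3]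
  · intro x hx
    simp only [iteratedDeriv_zero, pow_zero, div_one]
    apply b.one_of_mem_closedBall
    rw [mem_closedBall_zero_iff, Real.norm_eq_abs, abs_div,
      abs_of_nonneg (show (0:ℝ) ≤ n + 1 by positivity), div_le_iff₀ (by positivity)]
    show |x| ≤ 1 * (n + 1 : ℝ)
    linarith
  · intro x hx
    simp only [iteratedDeriv_zero, pow_zero, div_one]
    apply b.zero_of_le_dist
    rw [dist_zero_right, Real.norm_eq_abs, abs_div,
      abs_of_nonneg (show (0:ℝ) ≤ n + 1 by positivity), le_div_iff₀ (by positivity)]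
    exact hx

theorem flux (B : ℝ) (ψ : ℕ → ℝ → ℝ) (hψc : ∀ n, Continuous (ψ n)) (hψB : ∀ n x, |ψ n x| ≤ B)
    (hψ1 : ∀ (n : ℕ) (x : ℝ), |x| ≤ n → ψ n x = 1)
    (hψ0 : ∀ (n : ℕ) (x : ℝ), 2 * (n + 1 : ℝ) ≤ |x| → ψ n x = 0)
    (F F' : ℝ → ℝ → ℝ) (hF' : Continuous (Function.uncurry F')) (c d K : ℝ) (hcd : c ≤ d)
    (hd : ∀ t ∈ Icc c d, ∀ x, HasDerivAt (fun s => F s x) (F' t x) t)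
    (hQ : ∀ t ∈ Icc c d, QD (F t)) (hQ' : ∀ t ∈ Icc c d, QD (F' t))
    (hK : ∀ n, ∀ t ∈ Icc c d, |∫ x, ψ n x * F' t x| ≤ K) :
    (∫ x, F d x) - (∫ x, F c x) = ∫ t in c..d, ∫ x, F' t x := by
  have hψlim : ∀ x : ℝ, Tendsto (fun n => ψ n x) atTop (𝓝 1) := by
    intro x
    obtain ⟨m, hm⟩ := exists_nat_ge |x|
    refine tendsto_const_nhds.congr' ?_
    filter_upwards [eventually_ge_atTop m] with n hn
    exact (hψ1 n x (hm.trans (by exact_mod_cast hn))).symm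
  have hlim : ∀ g : ℝ → ℝ, QD g → Tendsto (fun n => ∫ x, ψ n x * g x) atTop (𝓝 (∫ x, g x)) := by
    intro g hg
    refine tendsto_integral_of_dominated_convergence (fun x => B * |g x|)
      (fun n => ((hψc n).mul hg.cont).aestronglyMeasurable) (hg.abs.integrable.const_mul B)
      (fun n => Eventually.of_forall fun x => ?_) (Eventually.of_forall fun x => ?_)
    · rw [Real.norm_eq_abs, abs_mul]
      exact mul_le_mul_of_nonneg_right (hψB n x) (abs_nonneg _)
    · simpa using (hψlim x).mul_const (g x)
  have hsupp : ∀ n (g : ℝ → ℝ), ∫ x, ψ n x * g x =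
      ∫ x in (-(2 * (n + 1 : ℝ)))..(2 * (n + 1 : ℝ)), ψ n x * g x := by
    intro n g
    symm
    apply intervalIntegral.integral_eq_integral_of_support_subset
    intro x hx
    by_contra hx'
    apply hx
    have : ψ n x = 0 := by
      apply hψ0
      by_contra h
      push Not at h
      rw [abs_lt] at h
      exact hx' ⟨h.1, h.2.le⟩
    simp [this]
  have hcont2 : ∀ n, Continuous (Function.uncurry fun t x => ψ n x * F' t x) := fun n =>
    ((hψc n).comp continuous_snd).mul hF'
  have hcut : ∀ n, (∫ x, ψ n x * F d x) - (∫ x, ψ n x * F c x)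
      = ∫ t in c..d, ∫ x, ψ n x * F' t x := by
    intro n
    have e1 : ∀ t ∈ Icc c d, Integrable (fun x => ψ n x * F t x) := fun t ht =>
      (QD.bdd_mul (hψc n) B (hψB n) (hQ t ht)).integrable
    rw [← integral_sub (e1 d ⟨hcd, le_rfl⟩) (e1 c ⟨le_rfl, hcd⟩)]
    have e2 : ∀ x, ψ n x * F d x - ψ n x * F c x = ψ n x * (F d x - F c x) := fun x => by ring
    simp_rw [e2]
    rw [hsupp n]
    simp_rw [hsupp n (F' _)]
    rw [intervalIntegral_intervalIntegral_swap]
    · refine intervalIntegral.integral_congr fun x _ => ?_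
      show ψ n x * (F d x - F c x) = ∫ t in c..d, ψ n x * F' t x
      rw [intervalIntegral.integral_const_mul]
      congr 1
      symm
      apply intervalIntegral.integral_eq_sub_of_hasDerivAt
      · intro t ht
        rw [uIcc_of_le hcd] at ht
        exact hd t ht x
      · exact (hF'.comp (continuous_id.prodMk continuous_const)).intervalIntegrable _ _
    · refine IntegrableOn.mono_set (t := (uIcc c d) ×ˢ uIcc _ _) ?_
        (prod_mono uIoc_subset_uIcc uIoc_subset_uIcc)
      exact (hcont2 n).continuousOn.integrableOn_compact (isCompact_uIcc.prod isCompact_uIcc)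
  have hR : Tendsto (fun n => ∫ t in c..d, ∫ x, ψ n x * F' t x) atTop
      (𝓝 (∫ t in c..d, ∫ x, F' t x)) := by
    refine intervalIntegral.tendsto_integral_filter_of_dominated_convergence (fun _ => K)
      (Eventually.of_forall fun n => ?_) (Eventually.of_forall fun n =>
        Eventually.of_forall fun t ht => ?_) intervalIntegrable_const
        (Eventually.of_forall fun t ht => ?_)
    · simp_rw [hsupp n (F' _)]
      exact (intervalIntegral.continuous_parametric_intervalIntegral_of_continuous'
        (hcont2 n) _ _).aestronglyMeasurable
    · rw [uIoc_of_le hcd] at ht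
      exact hK n t ⟨ht.1.le, ht.2⟩
    · rw [uIoc_of_le hcd] at ht
      exact hlim _ (hQ' t ⟨ht.1.le, ht.2⟩)
  have hL := (hlim _ (hQ d ⟨hcd, le_rfl⟩)).sub (hlim _ (hQ c ⟨le_rfl, hcd⟩))
  simp_rw [hcut] at hL
  exact tendsto_nhds_unique hL hR

theorem dl2 {g g1 : ℝ → ℝ} (hg : QD g) (hg1 : QD g1) (hd : ∀ x, HasDerivAt g (g1 x) x)
    (h : ℝ) (hh : 0 < h) : ∫ x, ((g (x + h) - g x) / h) ^ 2 ≤ ∫ x, g1 x ^ 2 := by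
  have q2 : QD (fun x => g1 x ^ 2) := hg1.pow 2 (by norm_num)
  have hJnt : Integrable (Function.uncurry fun (s x : ℝ) => g1 (s + x) ^ 2)
      ((volume.restrict (uIoc 0 h)).prod volume) := by
    have h1 : Integrable (fun p : ℝ × ℝ => (1 : ℝ) * g1 p.2 ^ 2)
        ((volume.restrict (uIoc 0 h)).prod volume) := by
      have : IsFiniteMeasure (volume.restrict (uIoc (0:ℝ) h)) :=
        ⟨by rw [Measure.restrict_apply_univ, uIoc_of_le hh.le]; simp⟩
      exact (integrable_const (1 : ℝ)).mul_prod q2.integrable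
    have h2 := (measurePreserving_prod_add (volume.restrict (uIoc (0:ℝ) h))
      (volume : Measure ℝ)).integrable_comp_of_integrable h1
    simpa [Function.uncurry_def, Function.comp_def] using h2
  have hsw := intervalIntegral_integral_swap hJnt
  have e1 : ∀ s : ℝ, ∫ x, g1 (s + x) ^ 2 = ∫ x, g1 x ^ 2 := fun s =>
    integral_add_left_eq_self (fun x => g1 x ^ 2) s
  simp_rw [e1] at hsw
  rw [intervalIntegral.integral_const, sub_zero, smul_eq_mul] at hsw
  have hJnt2 : Integrable (fun x => ∫ s in (0:ℝ)..h, g1 (s + x) ^ 2) := by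
    have := hJnt.integral_prod_right
    simpa [intervalIntegral.integral_of_le hh.le, uIoc_of_le hh.le] using this
  have hpt : ∀ x, ((g (x + h) - g x) / h) ^ 2 ≤ h⁻¹ * ∫ s in (0:ℝ)..h, g1 (s + x) ^ 2 := by
    intro x
    have c1 : Continuous g1 := hg1.cont
    have f1 : ∫ s in (0:ℝ)..h, g1 (s + x) = g (x + h) - g x := by
      rw [intervalIntegral.integral_comp_add_right (fun y => g1 y)]
      rw [intervalIntegral.integral_eq_sub_of_hasDerivAt (fun y _ => hd y)
        (hg1.cont.intervalIntegrable _ _), zero_add, add_comm]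
    set m := (g (x + h) - g x) / h with hm
    have f2 : 0 ≤ ∫ s in (0:ℝ)..h, (g1 (s + x) - m) ^ 2 :=
      intervalIntegral.integral_nonneg hh.le fun s _ => sq_nonneg _
    have f3 : ∫ s in (0:ℝ)..h, (g1 (s + x) - m) ^ 2 =
        (∫ s in (0:ℝ)..h, g1 (s + x) ^ 2) - 2 * m * (g (x + h) - g x) + h * m ^ 2 := by
      have : ∀ s, (g1 (s + x) - m) ^ 2 = g1 (s + x) ^ 2 - 2 * m * g1 (s + x) + m ^ 2 :=
        fun s => by ring
      simp_rw [this]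
      rw [intervalIntegral.integral_add (Continuous.intervalIntegrable (by fun_prop) _ _)
        (Continuous.intervalIntegrable (by fun_prop) _ _),
        intervalIntegral.integral_sub (Continuous.intervalIntegrable (by fun_prop) _ _)
        (Continuous.intervalIntegrable (by fun_prop) _ _), intervalIntegral.integral_const_mul, f1]
      simp
    have f4 : g (x + h) - g x = h * m := by rw [hm]; field_simp
    rw [f3, f4] at f2
    rw [inv_mul_eq_div, le_div_iff₀ hh]
    nlinarith
  calc ∫ x, ((g (x + h) - g x) / h) ^ 2 ≤ ∫ x, h⁻¹ * ∫ s in (0:ℝ)..h, g1 (s + x) ^ 2 :=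
        integral_mono ((((hg.shift h).sub hg).div_const h).pow 2 (by norm_num)).integrable
          (hJnt2.const_mul _) hpt
    _ = ∫ x, g1 x ^ 2 := by
        rw [integral_const_mul, ← hsw]; field_simp

theorem baire_prop (N : ℝ → ℝ) (a b : ℝ) (hcl : ∀ K, IsClosed {t | t ∈ Icc a b ∧ N t ≤ K})
    (hp : ∀ K, ∃ C, ∀ c d, a ≤ c → c ≤ d → d ≤ b → (∃ K', ∀ t ∈ Icc c d, N t ≤ K') →
      ∀ s ∈ Icc c d, ∀ t ∈ Icc c d, N s ≤ K → N t ≤ C) :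
    ∃ K, ∀ t ∈ Icc a b, N t ≤ K := by
  set G : ℝ → Prop := fun t => ∃ K, ∀ᶠ s in 𝓝[Icc a b] t, N s ≤ K with hG
  have hcpt : ∀ c d, a ≤ c → d ≤ b → (∀ t ∈ Icc c d, G t) → ∃ K, ∀ t ∈ Icc c d, N t ≤ K := by
    intro c d hc hd hg
    refine isCompact_Icc.induction_on (p := fun S => ∃ K, ∀ t ∈ S, N t ≤ K) ⟨0, by simp⟩ ?_ ?_ ?_
    · rintro s t hst ⟨K, hK⟩
      exact ⟨K, fun x hx => hK x (hst hx)⟩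
    · rintro s t ⟨K, hK⟩ ⟨K', hK'⟩
      refine ⟨max K K', fun x hx => ?_⟩
      rcases hx with hx | hx
      · exact (hK x hx).trans (le_max_left _ _)
      · exact (hK' x hx).trans (le_max_right _ _)
    · intro x hx
      obtain ⟨K, hK⟩ := hg x hx
      refine ⟨{s | N s ≤ K}, ?_, K, fun t ht => ht⟩
      exact nhdsWithin_mono x (Icc_subset_Icc hc hd) hK
  by_cases hall : ∀ t ∈ Icc a b, G t
  · exact hcpt a b le_rfl le_rfl hall
  exfalso
  push Not at hall
  set F : Set ℝ := {t | t ∈ Icc a b ∧ ¬ G t} with hF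
  have hFc : IsClosed F := by
    refine isClosed_of_closure_subset fun t ht => ?_
    have htI : t ∈ Icc a b := isClosed_Icc.closure_subset_iff.2 (fun x hx => hx.1) ht
    refine ⟨htI, ?_⟩
    rintro ⟨K, hK⟩
    have h1 := eventually_eventually_nhdsWithin.2 hK
    rw [mem_closure_iff_frequently] at ht
    have h2 := eventually_nhdsWithin_iff.1 h1
    obtain ⟨s, hs, hs'⟩ := (ht.and_eventually h2).exists
    exact hs.2 ⟨K, hs' hs.1⟩
  obtain ⟨t', ht'I, ht'G⟩ := hall
  have : Nonempty F := ⟨⟨t', ht'I, ht'G⟩⟩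
  have : CompleteSpace F := hFc.completeSpace_coe
  obtain ⟨n, ⟨t0, ht0F⟩, ht0⟩ := nonempty_interior_of_iUnion_of_closed
    (f := fun n : ℕ => {t : F | N t ≤ n}) (fun n => by
      have := (hcl n).preimage (continuous_subtype_val (p := fun x => x ∈ F))
      convert this using 1
      ext ⟨x, hx⟩
      simp only [mem_ofPred_eq, mem_preimage]
      exact ⟨fun h => ⟨hx.1, h⟩, fun h => h.2⟩) (by
      ext x
      simp only [mem_iUnion, mem_ofPred_eq, mem_univ, iff_true]
      exact exists_nat_ge _)
  rw [mem_interior_iff_mem_nhds, Metric.mem_nhds_iff] at ht0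
  obtain ⟨ε, hε, hball⟩ := ht0
  have hFn : ∀ s ∈ F, |s - t0| < ε → N s ≤ n := fun s hs hst =>
    hball (a := ⟨s, hs⟩) (by rw [Metric.mem_ball, Subtype.dist_eq, Real.dist_eq]; exact hst)
  obtain ⟨C, hC⟩ := hp n
  apply ht0F.2
  refine ⟨C, ?_⟩
  rw [eventually_nhdsWithin_iff]
  filter_upwards [Metric.ball_mem_nhds t0 hε] with s hs hsI
  rw [Metric.mem_ball, Real.dist_eq] at hs
  rcases le_total s t0 with hst | hst
  · obtain ⟨d, hdm, hdl⟩ := (isCompact_Icc.inter_right hFc : IsCompact (Icc s t0 ∩ F)).exists_isLeast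
      ⟨t0, ⟨hst, le_rfl⟩, ht0F⟩
    have hdI := hdm.2.1
    have hnd : N d ≤ n := hFn d hdm.2 (by
      rw [abs_lt] at hs ⊢
      constructor <;> linarith [hdm.1.1, hdm.1.2])
    obtain ⟨C0, hC0⟩ := hp (N s)
    have hb : ∀ r, s ≤ r → r < d → N r ≤ C0 := by
      intro r hsr hrd
      refine hC0 s r hsI.1 hsr (hrd.le.trans hdI.2) (hcpt s r hsI.1 (hrd.le.trans hdI.2) ?_)
        s ⟨le_rfl, hsr⟩ r ⟨hsr, le_rfl⟩ le_rfl
      intro t ht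
      by_contra hGt
      have := hdl ⟨⟨ht.1, ht.2.trans (hrd.le.trans hdm.1.2)⟩,
        ⟨hsI.1.trans ht.1, ht.2.trans (hrd.le.trans hdI.2)⟩, hGt⟩
      linarith [ht.2]
    refine hC s d hsI.1 hdm.1.1 hdI.2 ⟨max C0 (N d), fun t ht => ?_⟩ d ⟨hdm.1.1, le_rfl⟩ s
      ⟨le_rfl, hdm.1.1⟩ hnd
    rcases ht.2.lt_or_eq with h | h
    · exact (hb t ht.1 h).trans (le_max_left _ _)
    · rw [h]; exact le_max_right _ _
  · obtain ⟨d, hdm, hdl⟩ := (isCompact_Icc.inter_right hFc : IsCompact (Icc t0 s ∩ F)).exists_isGreatest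
      ⟨t0, ⟨le_rfl, hst⟩, ht0F⟩
    have hdI := hdm.2.1
    have hnd : N d ≤ n := hFn d hdm.2 (by
      rw [abs_lt] at hs ⊢
      constructor <;> linarith [hdm.1.1, hdm.1.2])
    obtain ⟨C0, hC0⟩ := hp (N s)
    have hb : ∀ r, r ≤ s → d < r → N r ≤ C0 := by
      intro r hsr hrd
      refine hC0 r s (hdI.1.trans hrd.le) hsr hsI.2 (hcpt r s (hdI.1.trans hrd.le) hsI.2 ?_)
        s ⟨hsr, le_rfl⟩ r ⟨le_rfl, hsr⟩ le_rfl
      intro t ht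
      by_contra hGt
      have := hdl ⟨⟨(hdm.1.1.trans hrd.le).trans ht.1, ht.2⟩,
        ⟨(hdI.1.trans hrd.le).trans ht.1, ht.2.trans hsI.2⟩, hGt⟩
      linarith [ht.1]
    refine hC d s hdI.1 hdm.1.2 hsI.2 ⟨max C0 (N d), fun t ht => ?_⟩ d ⟨le_rfl, hdm.1.2⟩ s
      ⟨hdm.1.2, le_rfl⟩ hnd
    rcases ht.1.lt_or_eq with h | h
    · exact (hb t ht.2 h).trans (le_max_left _ _)
    · rw [← h]; exact le_max_right _ _

/-- Forward difference quotient. -/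
noncomputable def Dq (h : ℝ) (g : ℝ → ℝ) : ℝ → ℝ := fun x => (g (x + h) - g x) / h

theorem QD.dq {g : ℝ → ℝ} (hg : QD g) (h : ℝ) : QD (Dq h g) := ((hg.shift h).sub hg).div_const h

theorem dq_deriv {g g1 : ℝ → ℝ} (hd : ∀ x, HasDerivAt g (g1 x) x) (h x : ℝ) :
    HasDerivAt (Dq h g) (Dq h g1 x) x :=
  (((hd (x + h)).comp_add_const x h).sub (hd x)).div_const h

theorem JT.dq {f : ℕ → ℝ → ℝ} (hf : JT f) (h : ℝ) : JT (fun k => Dq h (f k)) :=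
  ⟨fun k => (hf.1 k).dq h, fun k x => dq_deriv (hf.2 k) h x⟩

theorem dq_l2 {g g1 : ℝ → ℝ} (hg : QD g) (hg1 : QD g1) (hd : ∀ x, HasDerivAt g (g1 x) x)
    (h : ℝ) (hh : 0 < h) : ∫ x, Dq h g x ^ 2 ≤ ∫ x, g1 x ^ 2 := dl2 hg hg1 hd h hh

theorem dq_l2_crude {g : ℝ → ℝ} (hg : QD g) (h : ℝ) :
    ∫ x, Dq h g x ^ 2 ≤ 4 / h ^ 2 * ∫ x, g x ^ 2 := by
  have q1 := hg.pow 2 (by norm_num)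
  have q2 := (hg.shift h).pow 2 (by norm_num)
  have e : ∫ x, g (x + h) ^ 2 = ∫ x, g x ^ 2 := integral_add_right_eq_self (fun x => g x ^ 2) h
  have : ∫ x, Dq h g x ^ 2 ≤ ∫ x, 2 / h ^ 2 * (g (x + h) ^ 2 + g x ^ 2) := by
    refine integral_mono ((hg.dq h).pow 2 (by norm_num)).integrable
      ((q2.add q1).const_mul _).integrable (fun x => ?_)
    show Dq h g x ^ 2 ≤ 2 / h ^ 2 * (g (x + h) ^ 2 + g x ^ 2)
    unfold Dq
    rw [div_pow, div_mul_eq_mul_div]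
    gcongr
    nlinarith [sq_nonneg (g (x + h) + g x)]
  rw [integral_const_mul, integral_add q2.integrable q1.integrable, e] at this
  refine this.trans (le_of_eq ?_)
  ring

theorem dq_mvt {g g1 : ℝ → ℝ} (hd : ∀ x, HasDerivAt g (g1 x) x) {h : ℝ} (hh : 0 < h) (x : ℝ) :
    ∃ ξ ∈ Ioo x (x + h), Dq h g x = g1 ξ := by
  obtain ⟨ξ, hξ, e⟩ := exists_hasDerivAt_eq_slope g g1 (show x < x + h by linarith)
    (continuous_iff_continuousAt.2 fun y => (hd y).continuousAt).continuousOn (fun y _ => hd y)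
  refine ⟨ξ, hξ, ?_⟩
  rw [e]; unfold Dq; simp

theorem dq2_mvt {g g1 g2 : ℝ → ℝ} (hd : ∀ x, HasDerivAt g (g1 x) x)
    (hd1 : ∀ x, HasDerivAt g1 (g2 x) x) {h : ℝ} (hh : 0 < h) (x : ℝ) :
    ∃ ξ ∈ Ioo x (x + 2 * h), Dq h (Dq h g) x = g2 ξ := by
  obtain ⟨ξ, hξ, e⟩ := dq_mvt (dq_deriv hd h) hh x
  obtain ⟨ξ', hξ', e'⟩ := dq_mvt hd1 hh ξ
  exact ⟨ξ', ⟨by linarith [hξ.1, hξ'.1], by linarith [hξ.2, hξ'.2]⟩, e.trans e'⟩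

/-- step sizes -/
noncomputable def hs (n : ℕ) : ℝ := 1 / ((n : ℝ) + 1)

theorem hs_pos (n : ℕ) : 0 < hs n := by unfold hs; positivity

theorem hs_le (n : ℕ) : hs n ≤ 1 := by
  unfold hs
  rw [div_le_one (by positivity)]
  linarith [Nat.cast_nonneg (α := ℝ) n]

theorem dq2_bound {g g1 g2 : ℝ → ℝ} (hg2 : QD g2) (hd : ∀ x, HasDerivAt g (g1 x) x)
    (hd1 : ∀ x, HasDerivAt g1 (g2 x) x) :
    ∃ C, 0 ≤ C ∧ ∀ n x, |Dq (hs n) (Dq (hs n) g) x| ≤ C * (1 + x ^ 2)⁻¹ := by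
  obtain ⟨C, hC0, hC⟩ := hg2.nonneg_bound
  refine ⟨C * 10, by positivity, fun n x => ?_⟩
  obtain ⟨ξ, hξ, e⟩ := dq2_mvt hd hd1 (hs_pos n) x
  rw [e, ← div_eq_mul_inv, le_div_iff₀ (by positivity)]
  have h1 := hC ξ
  have hl := hs_le n
  have h2 : 1 + x ^ 2 ≤ (1 + ξ ^ 2) * 10 := by
    have h3 : x = ξ - (ξ - x) := by ring
    have h4 : 0 < ξ - x := by linarith [hξ.1]
    have h5 : ξ - x < 2 := by linarith [hξ.2]
    have h6 : (ξ - x) ^ 2 ≤ 4 := by nlinarith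
    nlinarith [sq_nonneg (ξ + (ξ - x)), sq_nonneg ξ]
  calc |g2 ξ| * (1 + x ^ 2) ≤ |g2 ξ| * ((1 + ξ ^ 2) * 10) := by gcongr
    _ = (|g2 ξ| * (1 + ξ ^ 2)) * 10 := by ring
    _ ≤ _ := by gcongr

theorem dq2_lim {g g1 g2 : ℝ → ℝ} (hg2 : QD g2) (hd : ∀ x, HasDerivAt g (g1 x) x)
    (hd1 : ∀ x, HasDerivAt g1 (g2 x) x) (x : ℝ) :
    Tendsto (fun n => Dq (hs n) (Dq (hs n) g) x) atTop (𝓝 (g2 x)) := by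
  choose ξ hξ e using fun n => dq2_mvt hd hd1 (hs_pos n) x
  simp_rw [e]
  have hlim : Tendsto hs atTop (𝓝 0) := tendsto_one_div_add_atTop_nhds_zero_nat
  have h1 : Tendsto ξ atTop (𝓝 x) := by
    refine tendsto_of_tendsto_of_tendsto_of_le_of_le tendsto_const_nhds ?_
      (fun n => (hξ n).1.le) (fun n => (hξ n).2.le)
    simpa using (hlim.const_mul 2).const_add x
  exact (hg2.cont.tendsto x).comp h1

theorem prodlim {g g1 g2 k k1 k2 : ℝ → ℝ} (hg : QD g) (hk : QD k) (hg2 : QD g2) (hk2 : QD k2)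
    (hd : ∀ x, HasDerivAt g (g1 x) x) (hd1 : ∀ x, HasDerivAt g1 (g2 x) x)
    (kd : ∀ x, HasDerivAt k (k1 x) x) (kd1 : ∀ x, HasDerivAt k1 (k2 x) x) :
    Tendsto (fun n => ∫ x, Dq (hs n) (Dq (hs n) g) x * Dq (hs n) (Dq (hs n) k) x) atTop
      (𝓝 (∫ x, g2 x * k2 x)) := by
  obtain ⟨C, hC0, hC⟩ := dq2_bound hg2 hd hd1
  obtain ⟨C', hC0', hC'⟩ := dq2_bound hk2 kd kd1
  refine tendsto_integral_of_dominated_convergence (fun x => C * C' * (1 + x ^ 2)⁻¹)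
    (fun n => (((hg.dq _).dq _).mul ((hk.dq _).dq _)).cont.aestronglyMeasurable)
    (integrable_inv_one_add_sq.const_mul _)
    (fun n => Eventually.of_forall fun x => ?_) (Eventually.of_forall fun x =>
      (dq2_lim hg2 hd hd1 x).mul (dq2_lim hk2 kd kd1 x))
  rw [Real.norm_eq_abs, abs_mul]
  have h1 : (1 + x ^ 2)⁻¹ ≤ (1 : ℝ) := inv_le_one_of_one_le₀ (by nlinarith [sq_nonneg x])
  have h0 : (0 : ℝ) ≤ (1 + x ^ 2)⁻¹ := by positivity
  calc _ ≤ (C * (1 + x ^ 2)⁻¹) * (C' * 1) := by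
        refine mul_le_mul (hC n x) ((hC' n x).trans ?_) (abs_nonneg _) (by positivity)
        gcongr
    _ = _ := by ring

theorem abs_mul_le_sq (a b : ℝ) : |a * b| ≤ (a ^ 2 + b ^ 2) / 2 := by
  rw [abs_le]; constructor <;> nlinarith [sq_nonneg (a + b), sq_nonneg (a - b)]

theorem int_mul_le {g k : ℝ → ℝ} (hg : QD g) (hk : QD k) {A B : ℝ} (hA : ∫ x, g x ^ 2 ≤ A)
    (hB : ∫ x, k x ^ 2 ≤ B) {X : ℝ → ℝ} (hX : Continuous X) {m : ℝ} (hm : ∀ x, |X x| ≤ m) :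
    |∫ x, X x * (g x * k x)| ≤ m * ((A + B) / 2) := by
  have h0 : 0 ≤ m := (abs_nonneg _).trans (hm 0)
  have q1 := hg.pow 2 (by norm_num)
  have q2 := hk.pow 2 (by norm_num)
  refine (int_bound (QD.bdd_mul hX m hm (hg.mul hk)) (((q1.add q2).div_const 2)) m
    (fun x => ?_)).trans ?_
  · rw [abs_mul]
    exact mul_le_mul (hm x) (abs_mul_le_sq _ _) (abs_nonneg _) h0
  · rw [integral_div, integral_add q1.integrable q2.integrable]
    gcongr

theorem b4 {f : ℕ → ℝ → ℝ} (hf : JT f) {K m h : ℝ} (hh : 0 < h)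
    (hK : ∫ x, (f 0 x ^ 2 + f 1 x ^ 2 + f 2 x ^ 2) ≤ K)
    (h0 : ∀ x, |f 0 x| ≤ m) (h1 : ∀ x, |f 1 x| ≤ m) :
    |∫ x, Dq h (Dq h (f 0)) x * Dq h (Dq h (fun y => 5 * (f 0 y ^ 4 * f 1 y))) x| ≤
      5 * (10 * m ^ 4 * K + m * ((K + 288 * m ^ 6 * K) / 2)) := by
  have q := hf.1
  have hm0 : 0 ≤ m := (abs_nonneg _).trans (h0 0)
  have hKs := hK
  rw [split3 hf] at hK
  have p : ∀ k, 0 ≤ ∫ x, f k x ^ 2 := fun k => integral_nonneg fun x => sq_nonneg _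
  have hv := (hf.dq h).dq h
  have n4 : (4 : ℕ) ≠ 0 := by norm_num
  have n3 : (3 : ℕ) ≠ 0 := by norm_num
  have n2 : (2 : ℕ) ≠ 0 := by norm_num
  have qa : QD (fun x => f 0 x ^ 4) := (q 0).pow 4 n4
  have qa1 : QD (fun x => 4 * (f 0 x ^ 3 * f 1 x)) := (((q 0).pow 3 n3).mul (q 1)).const_mul 4
  have qa2 : QD (fun x => 12 * (f 0 x ^ 2 * f 1 x ^ 2) + 4 * (f 0 x ^ 3 * f 2 x)) :=
    ((((q 0).pow 2 n2).mul ((q 1).pow 2 n2)).const_mul 12).add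
      ((((q 0).pow 3 n3).mul (q 2)).const_mul 4)
  have da : ∀ x, HasDerivAt (fun x => f 0 x ^ 4) (4 * (f 0 x ^ 3 * f 1 x)) x := fun x => by
    refine ((hf.2 0 x).pow 4).congr_deriv ?_
    simp; ring
  have da1 : ∀ x, HasDerivAt (fun x => 4 * (f 0 x ^ 3 * f 1 x))
      (12 * (f 0 x ^ 2 * f 1 x ^ 2) + 4 * (f 0 x ^ 3 * f 2 x)) x := fun x => by
    refine ((((hf.2 0 x).pow 3).mul (hf.2 1 x)).const_mul 4).congr_deriv ?_
    simp; ring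
  have ba1 : ∀ x, |4 * (f 0 x ^ 3 * f 1 x)| ≤ 4 * m ^ 4 := fun x => by
    rw [abs_mul, abs_mul, abs_pow, pow_succ m 3, abs_of_nonneg (by norm_num : (0:ℝ) ≤ 4)]
    gcongr
    · exact h0 x
    · exact h1 x
  have bDa : ∀ x, |Dq h (fun x => f 0 x ^ 4) x| ≤ 4 * m ^ 4 := fun x => by
    obtain ⟨ξ, _, e⟩ := dq_mvt da hh x
    rw [e]; exact ba1 ξ
  have hv0 : ∫ x, Dq h (Dq h (f 0)) x ^ 2 ≤ K :=
    ((dq_l2 ((q 0).dq h) ((q 1).dq h) (dq_deriv (hf.2 0) h) h hh).trans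
      (dq_l2 (q 1) (q 2) (hf.2 1) h hh)).trans (by linarith [p 0, p 1])
  have hDf1 : ∫ x, Dq h (f 1) (x + h) ^ 2 ≤ K := by
    rw [integral_add_right_eq_self (fun x => Dq h (f 1) x ^ 2) h]
    exact (dq_l2 (q 1) (q 2) (hf.2 1) h hh).trans (by linarith [p 0, p 1])
  have hD2a : ∫ x, Dq h (Dq h (fun x => f 0 x ^ 4)) x ^ 2 ≤ 288 * m ^ 6 * K := by
    refine ((dq_l2 (qa.dq h) (qa1.dq h) (dq_deriv da h) h hh).trans
      (dq_l2 qa1 qa2 da1 h hh)).trans ?_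
    have e : ∫ x, (12 * (f 0 x ^ 2 * f 1 x ^ 2) + 4 * (f 0 x ^ 3 * f 2 x)) ^ 2 ≤
        ∫ x, 288 * m ^ 6 * (f 0 x ^ 2 + f 1 x ^ 2 + f 2 x ^ 2) := by
      refine integral_mono (qa2.pow 2 n2).integrable
        (((q 0).sq_sum (q 1) (q 2)).const_mul _).integrable (fun x => ?_)
      have s0 : f 0 x ^ 2 ≤ m ^ 2 := sq_le_sq' (abs_le.1 (h0 x)).1 (abs_le.1 (h0 x)).2
      have s1 : f 1 x ^ 2 ≤ m ^ 2 := sq_le_sq' (abs_le.1 (h1 x)).1 (abs_le.1 (h1 x)).2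
      have r1 : (f 0 x ^ 2 * f 1 x ^ 2) ^ 2 ≤ m ^ 6 * f 1 x ^ 2 := by
        calc (f 0 x ^ 2 * f 1 x ^ 2) ^ 2 = (f 0 x ^ 2) ^ 2 * (f 1 x ^ 2) * f 1 x ^ 2 := by ring
          _ ≤ (m ^ 2) ^ 2 * m ^ 2 * f 1 x ^ 2 := by gcongr
          _ = _ := by ring
      have r2 : (f 0 x ^ 3 * f 2 x) ^ 2 ≤ m ^ 6 * f 2 x ^ 2 := by
        calc (f 0 x ^ 3 * f 2 x) ^ 2 = (f 0 x ^ 2) ^ 3 * f 2 x ^ 2 := by ring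
          _ ≤ (m ^ 2) ^ 3 * f 2 x ^ 2 := by gcongr
          _ = _ := by ring
      have r3 : 0 ≤ m ^ 6 * f 0 x ^ 2 := by positivity
      have r4 : 0 ≤ m ^ 6 * f 2 x ^ 2 := by positivity
      show (12 * (f 0 x ^ 2 * f 1 x ^ 2) + 4 * (f 0 x ^ 3 * f 2 x)) ^ 2 ≤ _
      have r5 := sq_nonneg (12 * (f 0 x ^ 2 * f 1 x ^ 2) - 4 * (f 0 x ^ 3 * f 2 x))
      linarith
    rw [integral_const_mul] at e
    exact e.trans (by gcongr)
  have hK0 : 0 ≤ K := by linarith [p 0, p 1, p 2]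
  -- the three pieces
  have A1 : QD (fun x => Dq h (Dq h (f 0)) x * (f 0 x ^ 4 * Dq h (Dq h (f 1)) x)) :=
    (hv.1 0).mul (qa.mul (hv.1 1))
  have A2 : QD (fun x => Dq h (fun x => f 0 x ^ 4) x *
      (Dq h (Dq h (f 0)) x * Dq h (f 1) (x + h))) :=
    (qa.dq h).mul ((hv.1 0).mul (((q 1).dq h).shift h))
  have A3 : QD (fun x => f 1 (x + h + h) *
      (Dq h (Dq h (f 0)) x * Dq h (Dq h (fun x => f 0 x ^ 4)) x)) :=
    (((q 1).shift h).shift h).mul ((hv.1 0).mul ((qa.dq h).dq h))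
  have I1 : |∫ x, Dq h (Dq h (f 0)) x * (f 0 x ^ 4 * Dq h (Dq h (f 1)) x)| ≤ 2 * m ^ 4 * K := by
    have R1 : QD (fun x => 1 / 2 * (4 * (f 0 x ^ 3 * f 1 x) * Dq h (Dq h (f 0)) x ^ 2)) :=
      (qa1.mul ((hv.1 0).pow 2 n2)).const_mul _
    have e := int_parts (P := fun x => 1 / 2 * (f 0 x ^ 4 * Dq h (Dq h (f 0)) x ^ 2))
      ((qa.mul ((hv.1 0).pow 2 n2)).const_mul _) A1 R1 (fun x => by
        refine (((da x).mul ((hv.2 0 x).pow 2)).const_mul (1 / 2)).congr_deriv ?_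
        simp; ring)
    rw [e, abs_neg]
    refine (int_bound R1 ((hv.1 0).pow 2 n2) (2 * m ^ 4) (fun x => ?_)).trans (by gcongr)
    rw [abs_mul, abs_mul, abs_of_nonneg (sq_nonneg (Dq h (Dq h (f 0)) x)),
      abs_of_nonneg (by norm_num : (0:ℝ) ≤ 1 / 2)]
    have := mul_le_mul_of_nonneg_right (ba1 x) (sq_nonneg (Dq h (Dq h (f 0)) x))
    linarith
  have I2 := int_mul_le (hv.1 0) (((q 1).dq h).shift h) hv0 hDf1 (qa.dq h).cont bDa
  have I3 := int_mul_le (hv.1 0) ((qa.dq h).dq h) hv0 hD2a (((q 1).shift h).shift h).cont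
    (fun x => h1 _)
  have split : ∀ x, Dq h (Dq h (f 0)) x * Dq h (Dq h (fun y => 5 * (f 0 y ^ 4 * f 1 y))) x
      = 5 * (Dq h (Dq h (f 0)) x * (f 0 x ^ 4 * Dq h (Dq h (f 1)) x)
        + 2 * (Dq h (fun x => f 0 x ^ 4) x * (Dq h (Dq h (f 0)) x * Dq h (f 1) (x + h)))
        + f 1 (x + h + h) * (Dq h (Dq h (f 0)) x * Dq h (Dq h (fun x => f 0 x ^ 4)) x)) := by
    intro x
    have : Dq h (Dq h (fun y => 5 * (f 0 y ^ 4 * f 1 y))) x = 5 * (f 0 x ^ 4 * Dq h (Dq h (f 1)) x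
        + 2 * (Dq h (fun x => f 0 x ^ 4) x * Dq h (f 1) (x + h))
        + f 1 (x + h + h) * Dq h (Dq h (fun x => f 0 x ^ 4)) x) := by
      unfold Dq
      field_simp
      ring
    rw [this]; ring
  simp_rw [split]
  rw [integral_const_mul, integral_add (A1.add (A2.const_mul 2)).integrable A3.integrable,
    integral_add A1.integrable (A2.const_mul 2).integrable, integral_const_mul, abs_mul,
    abs_of_nonneg (by norm_num : (0:ℝ) ≤ 5)]
  refine mul_le_mul_of_nonneg_left ?_ (by norm_num)
  refine (abs_add_three _ _ _).trans ?_
  rw [abs_mul 2, abs_of_nonneg (by norm_num : (0:ℝ) ≤ 2)]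
  linarith

theorem zero5 {f : ℕ → ℝ → ℝ} (hf : JT f) : ∫ x, f 0 x * f 5 x = 0 := by
  have q := hf.1
  refine int_deriv_zero (P := fun x => f 0 x * f 4 x - f 1 x * f 3 x + 1 / 2 * f 2 x ^ 2)
    ((((q 0).mul (q 4)).sub ((q 1).mul (q 3))).add (((q 2).pow 2 (by norm_num)).const_mul _))
    ((q 0).mul (q 5)) (fun x => ?_)
  refine ((((hf.2 0 x).mul (hf.2 4 x)).sub ((hf.2 1 x).mul (hf.2 3 x))).add
    (((hf.2 2 x).pow 2).const_mul (1 / 2))).congr_deriv ?_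
  simp; ring

theorem int_lin4 {A1 A2 A3 A4 : ℝ → ℝ} (h1 : QD A1) (h2 : QD A2) (h3 : QD A3) (h4 : QD A4)
    (c1 c2 c3 c4 : ℝ) : ∫ x, (c1 * A1 x + c2 * A2 x + c3 * A3 x + c4 * A4 x) =
      c1 * (∫ x, A1 x) + c2 * (∫ x, A2 x) + c3 * (∫ x, A3 x) + c4 * ∫ x, A4 x := by
  rw [integral_add (((h1.const_mul c1).add (h2.const_mul c2)).add (h3.const_mul c3)).integrable
    (h4.const_mul c4).integrable,
    integral_add ((h1.const_mul c1).add (h2.const_mul c2)).integrable (h3.const_mul c3).integrable,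
    integral_add (h1.const_mul c1).integrable (h2.const_mul c2).integrable]
  simp only [integral_const_mul]

theorem lin4_bound {a1 a2 a3 a4 m1 m2 m3 m4 : ℝ} (h1 : |a1| ≤ m1) (h2 : |a2| ≤ m2)
    (h3 : |a3| ≤ m3) (h4 : |a4| ≤ m4) (c1 c2 c3 c4 : ℝ) :
    |c1 * a1 + c2 * a2 + c3 * a3 + c4 * a4| ≤ |c1| * m1 + |c2| * m2 + |c3| * m3 + |c4| * m4 := by
  refine (abs_add_le _ _).trans (add_le_add ((abs_add_three _ _ _).trans
    (add_le_add (add_le_add ?_ ?_) ?_)) ?_) <;> rw [abs_mul] <;> gcongr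


theorem bpow {f : ℕ → ℝ → ℝ} (hf : JT f) {K m B : ℝ}
    (hK : ∫ x, (f 0 x ^ 2 + f 1 x ^ 2 + f 2 x ^ 2) ≤ K) (h0 : ∀ x, |f 0 x| ≤ m)
    {X : ℝ → ℝ} (hX : Continuous X) (hB : ∀ x, |X x| ≤ B) (n : ℕ) :
    |∫ x, X x * (f 0 x ^ (n + 1) * f 1 x)| ≤ B * m ^ n * ((K + K) / 2) := by
  rw [split3 hf] at hK
  have p : ∀ k, 0 ≤ ∫ x, f k x ^ 2 := fun k => integral_nonneg fun x => sq_nonneg _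
  have hm0 : 0 ≤ m := (abs_nonneg _).trans (h0 0)
  have hB0 : 0 ≤ B := (abs_nonneg _).trans (hB 0)
  have := int_mul_le (hf.1 0) (hf.1 1) (A := K) (B := K) (by linarith [p 0, p 1, p 2])
    (by linarith [p 0, p 1, p 2]) (X := fun x => X x * f 0 x ^ n) (m := B * m ^ n)
    (hX.mul ((hf.1 0).cont.pow n)) (fun x => by
      rw [abs_mul, abs_pow]
      exact mul_le_mul (hB x) (pow_le_pow_left₀ (abs_nonneg _) (h0 x) n) (by positivity) hB0)
  refine le_trans (le_of_eq ?_) this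
  congr 2
  ext x
  ring

/-- Linear combination of four densities. -/
def L4 (c1 c2 c3 c4 : ℝ) (A1 A2 A3 A4 : ℝ → ℝ → ℝ) (t x : ℝ) : ℝ :=
  c1 * A1 t x + c2 * A2 t x + c3 * A3 t x + c4 * A4 t x

theorem flux4 (F A1 A2 A3 A4 : ℝ → ℝ → ℝ) (c1 c2 c3 c4 c d : ℝ) (hcd : c ≤ d)
    (k1 : Continuous (Function.uncurry A1)) (k2 : Continuous (Function.uncurry A2))
    (k3 : Continuous (Function.uncurry A3)) (k4 : Continuous (Function.uncurry A4))
    (q1 : ∀ t ∈ Icc c d, QD (A1 t)) (q2 : ∀ t ∈ Icc c d, QD (A2 t))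
    (q3 : ∀ t ∈ Icc c d, QD (A3 t)) (q4 : ∀ t ∈ Icc c d, QD (A4 t))
    (m1 : ∀ B, ∃ M, ∀ X, Cut B X → ∀ t ∈ Icc c d, |∫ x, X 0 x * A1 t x| ≤ M)
    (m2 : ∀ B, ∃ M, ∀ X, Cut B X → ∀ t ∈ Icc c d, |∫ x, X 0 x * A2 t x| ≤ M)
    (m3 : ∀ B, ∃ M, ∀ X, Cut B X → ∀ t ∈ Icc c d, |∫ x, X 0 x * A3 t x| ≤ M)
    (m4 : ∀ B, ∃ M, ∀ X, Cut B X → ∀ t ∈ Icc c d, |∫ x, X 0 x * A4 t x| ≤ M)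
    (hQ : ∀ t ∈ Icc c d, QD (F t))
    (hd : ∀ t ∈ Icc c d, ∀ x, HasDerivAt (fun s => F s x) (L4 c1 c2 c3 c4 A1 A2 A3 A4 t x) t) :
    (∫ x, F d x) - (∫ x, F c x) = ∫ t in c..d, ∫ x, L4 c1 c2 c3 c4 A1 A2 A3 A4 t x := by
  obtain ⟨B, ψ, hψ⟩ := cut_exists
  obtain ⟨M1, m1⟩ := m1 B
  obtain ⟨M2, m2⟩ := m2 B
  obtain ⟨M3, m3⟩ := m3 B
  obtain ⟨M4, m4⟩ := m4 B
  refine flux B (fun n => ψ n 0)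
    (fun n => continuous_iff_continuousAt.2 fun x => ((hψ n).1.1 0 x).continuousAt)
    (fun n x => (hψ n).1.2 0 (by norm_num) x) (fun n => (hψ n).2.1) (fun n => (hψ n).2.2)
    F (L4 c1 c2 c3 c4 A1 A2 A3 A4) ?_ c d (|c1| * M1 + |c2| * M2 + |c3| * M3 + |c4| * M4)
    hcd hd hQ ?_ ?_
  · exact (((k1.const_mul c1).add (k2.const_mul c2)).add (k3.const_mul c3)).add (k4.const_mul c4)
  · intro t ht
    exact ((((q1 t ht).const_mul c1).add ((q2 t ht).const_mul c2)).add
      ((q3 t ht).const_mul c3)).add ((q4 t ht).const_mul c4)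
  · intro n t ht
    have hX := (hψ n).1
    have z : (0 : ℕ) ≤ 3 := by norm_num
    have e : (∫ x, ψ n 0 x * L4 c1 c2 c3 c4 A1 A2 A3 A4 t x) =
        ∫ x, (c1 * (ψ n 0 x * A1 t x) + c2 * (ψ n 0 x * A2 t x) + c3 * (ψ n 0 x * A3 t x)
          + c4 * (ψ n 0 x * A4 t x)) := by
      congr 1; ext x; unfold L4; ring
    rw [e, int_lin4 (hX.mul 0 z (q1 t ht)) (hX.mul 0 z (q2 t ht)) (hX.mul 0 z (q3 t ht))
      (hX.mul 0 z (q4 t ht))]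
    exact lin4_bound (m1 _ hX t ht) (m2 _ hX t ht) (m3 _ hX t ht) (m4 _ hX t ht) _ _ _ _

theorem Cut.cont0 {B : ℝ} {X : ℕ → ℝ → ℝ} (hX : Cut B X) : Continuous (X 0) :=
  continuous_iff_continuousAt.2 fun x => (hX.1 0 x).continuousAt

theorem mass {β a b : ℝ} {U : ℝ → ℕ → ℝ → ℝ} (S : Sett β a b U) {c d K : ℝ} (hac : a ≤ c)
    (hcd : c ≤ d) (hdb : d ≤ b)
    (hK : ∀ t ∈ Icc c d, ∫ x, (U t 0 x ^ 2 + U t 1 x ^ 2 + U t 2 x ^ 2) ≤ K) :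
    ∫ x, U d 0 x ^ 2 = ∫ x, U c 0 x ^ 2 := by
  have hsub : ∀ t ∈ Icc c d, t ∈ Icc a b := fun t ht => ⟨hac.trans ht.1, ht.2.trans hdb⟩
  have J : ∀ t ∈ Icc c d, JT (U t) := fun t ht => S.jt t (hsub t ht)
  have h0 : ∀ t ∈ Icc c d, ∀ x, |U t 0 x| ≤ Real.sqrt K := fun t ht x =>
    Real.abs_le_sqrt (sup01 (J t ht) (hK t ht) x).1
  have C := S.cont
  have ka : Continuous (Function.uncurry fun t x => U t 0 x * U t 5 x) := (C 0).mul (C 5)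
  have kb : Continuous (Function.uncurry fun t x => U t 0 x ^ 5 * U t 1 x) :=
    ((C 0).pow 5).mul (C 1)
  have qa : ∀ t ∈ Icc c d, QD (fun x => U t 0 x * U t 5 x) := fun t ht =>
    ((J t ht).1 0).mul ((J t ht).1 5)
  have qb : ∀ t ∈ Icc c d, QD (fun x => U t 0 x ^ 5 * U t 1 x) := fun t ht =>
    (((J t ht).1 0).pow 5 (by norm_num)).mul ((J t ht).1 1)
  have ma : ∀ B, ∃ M, ∀ X, Cut B X → ∀ t ∈ Icc c d,
      |∫ x, X 0 x * (U t 0 x * U t 5 x)| ≤ M := by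
    intro B
    refine ⟨5 * B * K, fun X hX t ht => (b1 (J t ht) hX).trans ?_⟩
    have : 0 ≤ B := (abs_nonneg _).trans (hX.2 0 (by norm_num) 0)
    have := hK t ht
    gcongr
  have mb : ∀ B, ∃ M, ∀ X, Cut B X → ∀ t ∈ Icc c d,
      |∫ x, X 0 x * (U t 0 x ^ 5 * U t 1 x)| ≤ M := fun B =>
    ⟨_, fun X hX t ht => bpow (J t ht) (hK t ht) (h0 t ht) hX.cont0 (hX.2 0 (by norm_num)) 4⟩
  have key := flux4 (fun t x => U t 0 x ^ 2) _ _ _ _ (2 / 5) (10 * β) 0 0 c d hcd ka kb kb kb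
    qa qb qb qb ma mb mb mb (fun t ht => ((J t ht).1 0).pow 2 (by norm_num)) (fun t ht x => by
      refine ((S.eq t (hsub t ht) x).pow 2).congr_deriv ?_
      unfold L4
      simp
      ring)
  rw [← sub_eq_zero, key]
  rw [intervalIntegral.integral_congr (g := fun _ => (0 : ℝ)), intervalIntegral.integral_zero]
  intro t ht
  rw [uIcc_of_le hcd] at ht
  have := int_lin4 (qa t ht) (qb t ht) (qb t ht) (qb t ht) (2 / 5) (10 * β) 0 0
  rw [zero5 (J t ht), quintic_zero (J t ht) 5 (by norm_num)] at this
  simp only [mul_zero, add_zero] at this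
  exact this

theorem dq_time {g : ℝ → ℝ → ℝ} {g' : ℝ → ℝ} {t : ℝ}
    (hg : ∀ x, HasDerivAt (fun s => g s x) (g' x) t) (h x : ℝ) :
    HasDerivAt (fun s => Dq h (g s) x) (Dq h g' x) t :=
  ((hg (x + h)).sub (hg x)).div_const h

theorem dq_cont {g : ℝ → ℝ → ℝ} (hg : Continuous (Function.uncurry g)) (h : ℝ) :
    Continuous (Function.uncurry fun t => Dq h (g t)) := by
  have : Continuous fun p : ℝ × ℝ => Function.uncurry g (p.1, p.2 + h) :=
    hg.comp (by fun_prop)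
  exact (this.sub hg).div_const h

theorem cut_one : Cut 1 (fun j _ => if j = 0 then (1 : ℝ) else 0) := by
  refine ⟨fun j x => ?_, fun j _ x => ?_⟩
  · simpa using hasDerivAt_const x (if j = 0 then (1 : ℝ) else 0)
  · dsimp only; split_ifs <;> simp

theorem dqdq_l2 {g : ℝ → ℝ} (hg : QD g) (h : ℝ) :
    ∫ x, Dq h (Dq h g) x ^ 2 ≤ 4 / h ^ 2 * (4 / h ^ 2 * ∫ x, g x ^ 2) :=
  (dq_l2_crude (hg.dq h) h).trans (mul_le_mul_of_nonneg_left (dq_l2_crude hg h) (by positivity))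



/-- The regularised flux at step `h`. -/
noncomputable def Fl (β h : ℝ) (U : ℝ → ℕ → ℝ → ℝ) : ℝ → ℝ → ℝ :=
  L4 (1 / 5) β β (25 * β ^ 2) (fun t x => Dq h (Dq h (U t 0)) x * Dq h (Dq h (U t 5)) x)
    (fun t x => Dq h (Dq h (U t 0)) x * Dq h (Dq h (fun y => 5 * (U t 0 y ^ 4 * U t 1 y))) x)
    (fun t x => U t 0 x ^ 5 * U t 5 x) (fun t x => U t 0 x ^ 9 * U t 1 x)

theorem Fl_cont {β a b : ℝ} {U : ℝ → ℕ → ℝ → ℝ} (S : Sett β a b U) (h : ℝ) :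
    Continuous (Function.uncurry (Fl β h U)) := by
  have C := S.cont
  have D : ∀ k, Continuous (Function.uncurry fun t => Dq h (Dq h (U t k))) := fun k =>
    dq_cont (dq_cont (C k) h) h
  have G : Continuous (Function.uncurry fun t y => 5 * (U t 0 y ^ 4 * U t 1 y)) :=
    (((C 0).pow 4).mul (C 1)).const_mul 5
  have DG := dq_cont (dq_cont G h) h
  exact ((((D 0).mul (D 5)).const_mul _).add (((D 0).mul DG).const_mul _)).add
    ((((C 0).pow 5).mul (C 5)).const_mul _) |>.add ((((C 0).pow 9).mul (C 1)).const_mul _)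

theorem QD.G {f : ℕ → ℝ → ℝ} (hf : JT f) : QD (fun y => 5 * (f 0 y ^ 4 * f 1 y)) :=
  (((hf.1 0).pow 4 (by norm_num)).mul (hf.1 1)).const_mul 5

theorem Fl_int {β h : ℝ} {U : ℝ → ℕ → ℝ → ℝ} {t : ℝ} (J : JT (U t)) :
    ∫ x, Fl β h U t x = β * (∫ x, Dq h (Dq h (U t 0)) x *
      Dq h (Dq h (fun y => 5 * (U t 0 y ^ 4 * U t 1 y))) x) +
      β * ∫ x, U t 0 x ^ 5 * U t 5 x := by
  have V := (J.dq h).dq h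
  have := int_lin4 ((V.1 0).mul (V.1 5)) ((V.1 0).mul (((QD.G J).dq h).dq h))
    (((J.1 0).pow 5 (by norm_num)).mul (J.1 5)) (((J.1 0).pow 9 (by norm_num)).mul (J.1 1))
    (1 / 5) β β (25 * β ^ 2)
  rw [zero5 V, quintic_zero J 9 (by norm_num)] at this
  simp only [mul_zero, add_zero, zero_add] at this
  exact this

theorem Fl_bound {β h K m : ℝ} {U : ℝ → ℕ → ℝ → ℝ} {t : ℝ} (J : JT (U t)) (hh : 0 < h)
    (hK : ∫ x, (U t 0 x ^ 2 + U t 1 x ^ 2 + U t 2 x ^ 2) ≤ K)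
    (h0 : ∀ x, |U t 0 x| ≤ m) (h1 : ∀ x, |U t 1 x| ≤ m) :
    |∫ x, Fl β h U t x| ≤ |β| * (5 * (10 * m ^ 4 * K + m * ((K + 288 * m ^ 6 * K) / 2))) +
      |β| * (300 * (1 * m ^ 4) * K) := by
  rw [Fl_int J]
  have e2 := b2 J cut_one h0 h1
  simp only [if_true, one_mul] at e2
  refine (abs_add_le _ _).trans ?_
  rw [abs_mul, abs_mul]
  refine add_le_add (mul_le_mul_of_nonneg_left (b4 J hh hK h0 h1) (abs_nonneg _))
    (mul_le_mul_of_nonneg_left (e2.trans ?_) (abs_nonneg _))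
  rw [one_mul]
  exact mul_le_mul_of_nonneg_left hK (by positivity)

theorem Fl_lim {β : ℝ} {U : ℝ → ℕ → ℝ → ℝ} {t : ℝ} (J : JT (U t)) :
    Tendsto (fun n => ∫ x, Fl β (hs n) U t x) atTop (𝓝 0) := by
  simp_rw [Fl_int J]
  have q := J.1
  have n4 : (4 : ℕ) ≠ 0 := by norm_num
  have n3 : (3 : ℕ) ≠ 0 := by norm_num
  have n2 : (2 : ℕ) ≠ 0 := by norm_num
  have := prodlim (q 0) (QD.G J) (q 2) (k2 := fun x => 60 * (U t 0 x ^ 2 * U t 1 x ^ 3)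
      + 60 * (U t 0 x ^ 3 * U t 1 x * U t 2 x) + 5 * (U t 0 x ^ 4 * U t 3 x))
    (k1 := fun x => 20 * (U t 0 x ^ 3 * U t 1 x ^ 2) + 5 * (U t 0 x ^ 4 * U t 2 x))
    ((((((q 0).pow 2 n2).mul ((q 1).pow 3 n3)).const_mul 60).add
      (((((q 0).pow 3 n3).mul (q 1)).mul (q 2)).const_mul 60)).add
      ((((q 0).pow 4 n4).mul (q 3)).const_mul 5))
    (J.2 0) (J.2 1)
    (fun x => by
      refine ((((J.2 0 x).pow 4).mul (J.2 1 x)).const_mul 5).congr_deriv ?_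
      simp; ring)
    (fun x => by
      refine (((((J.2 0 x).pow 3).mul ((J.2 1 x).pow 2)).const_mul 20).add
        ((((J.2 0 x).pow 4).mul (J.2 2 x)).const_mul 5)).congr_deriv ?_
      simp; ring)
  have e := final_id J
  have h2 := (this.const_mul β).add_const (β * ∫ x, U t 0 x ^ 5 * U t 5 x)
  rw [e] at h2
  rw [e]
  convert h2 using 2
  ring

theorem energy_h {β a b : ℝ} {U : ℝ → ℕ → ℝ → ℝ} (S : Sett β a b U) {c d K : ℝ} (hac : a ≤ c)
    (hcd : c ≤ d) (hdb : d ≤ b)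
    (hK : ∀ t ∈ Icc c d, ∫ x, (U t 0 x ^ 2 + U t 1 x ^ 2 + U t 2 x ^ 2) ≤ K) (h : ℝ) :
    (∫ x, (1 / 2 * (Dq h (Dq h (U d 0)) x * Dq h (Dq h (U d 0)) x) + 5 / 6 * β * U d 0 x ^ 6)) -
    (∫ x, (1 / 2 * (Dq h (Dq h (U c 0)) x * Dq h (Dq h (U c 0)) x) + 5 / 6 * β * U c 0 x ^ 6)) =
      ∫ t in c..d, ∫ x, Fl β h U t x := by
  have hsub : ∀ t ∈ Icc c d, t ∈ Icc a b := fun t ht => ⟨hac.trans ht.1, ht.2.trans hdb⟩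
  have J : ∀ t ∈ Icc c d, JT (U t) := fun t ht => S.jt t (hsub t ht)
  have V : ∀ t ∈ Icc c d, JT (fun k => Dq h (Dq h (U t k))) := fun t ht => ((J t ht).dq h).dq h
  have h0 : ∀ t ∈ Icc c d, ∀ x, |U t 0 x| ≤ Real.sqrt K := fun t ht x =>
    Real.abs_le_sqrt (sup01 (J t ht) (hK t ht) x).1
  have h1 : ∀ t ∈ Icc c d, ∀ x, |U t 1 x| ≤ Real.sqrt K := fun t ht x =>
    Real.abs_le_sqrt (sup01 (J t ht) (hK t ht) x).2
  have C := S.cont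
  have D : ∀ k, Continuous (Function.uncurry fun t => Dq h (Dq h (U t k))) := fun k =>
    dq_cont (dq_cont (C k) h) h
  have G : Continuous (Function.uncurry fun t y => 5 * (U t 0 y ^ 4 * U t 1 y)) :=
    (((C 0).pow 4).mul (C 1)).const_mul 5
  have DG := dq_cont (dq_cont G h) h
  have l2 : ∀ t ∈ Icc c d, (∫ x, U t 0 x ^ 2) ≤ K ∧ (∫ x, U t 1 x ^ 2) ≤ K ∧
      (∫ x, U t 2 x ^ 2) ≤ K := by
    intro t ht
    have := hK t ht
    rw [split3 (J t ht)] at this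
    have p : ∀ k, 0 ≤ ∫ x, U t k x ^ 2 := fun k => integral_nonneg fun x => sq_nonneg _
    exact ⟨by linarith [p 0, p 1, p 2], by linarith [p 0, p 1, p 2], by linarith [p 0, p 1, p 2]⟩
  set H : ℝ := 4 / h ^ 2 with hH
  have hH0 : 0 ≤ H := by positivity
  have v2 : ∀ t ∈ Icc c d, ∀ k, (∫ x, U t k x ^ 2) ≤ K →
      ∫ x, Dq h (Dq h (U t k)) x ^ 2 ≤ H * (H * K) := fun t ht k hk =>
    (dqdq_l2 ((J t ht).1 k) h).trans (by rw [← hH]; gcongr)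
  have gl2 : ∀ t ∈ Icc c d, ∫ x, (5 * (U t 0 x ^ 4 * U t 1 x)) ^ 2 ≤ 25 * Real.sqrt K ^ 8 * K := by
    intro t ht
    have := int_bound ((QD.G (J t ht)).pow 2 (by norm_num))
      (((J t ht).1 1).pow 2 (by norm_num)) (25 * Real.sqrt K ^ 8) (fun x => by
        rw [abs_of_nonneg (sq_nonneg _)]
        have : U t 0 x ^ 8 ≤ Real.sqrt K ^ 8 := by
          rw [← Even.pow_abs (by decide : Even 8) (U t 0 x)]
          exact pow_le_pow_left₀ (abs_nonneg _) (h0 t ht x) 8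
        calc (5 * (U t 0 x ^ 4 * U t 1 x)) ^ 2 = 25 * U t 0 x ^ 8 * U t 1 x ^ 2 := by ring
          _ ≤ _ := by gcongr)
    refine (le_abs_self _).trans (this.trans ?_)
    have := (l2 t ht).2.1
    gcongr
  refine flux4 (fun t x => 1 / 2 * (Dq h (Dq h (U t 0)) x * Dq h (Dq h (U t 0)) x)
    + 5 / 6 * β * U t 0 x ^ 6) _ _ _ _ _ _ _ _ c d hcd ((D 0).mul (D 5)) ((D 0).mul DG)
    (((C 0).pow 5).mul (C 5)) (((C 0).pow 9).mul (C 1))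
    (fun t ht => ((V t ht).1 0).mul ((V t ht).1 5))
    (fun t ht => ((V t ht).1 0).mul (((QD.G (J t ht)).dq h).dq h))
    (fun t ht => (((J t ht).1 0).pow 5 (by norm_num)).mul ((J t ht).1 5))
    (fun t ht => (((J t ht).1 0).pow 9 (by norm_num)).mul ((J t ht).1 1)) ?_ ?_ ?_ ?_ ?_ ?_
  · intro B
    refine ⟨5 * B * (H * (H * K) + H * (H * K) + H * (H * K)),
      fun X hX t ht => (b1 (V t ht) hX).trans ?_⟩
    have hB : 0 ≤ B := (abs_nonneg _).trans (hX.2 0 (by norm_num) 0)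
    rw [split3 (V t ht)]
    have i0 := v2 t ht 0 (l2 t ht).1
    have i1 := v2 t ht 1 (l2 t ht).2.1
    have i2 := v2 t ht 2 (l2 t ht).2.2
    gcongr
  · intro B
    exact ⟨_, fun X hX t ht => int_mul_le ((V t ht).1 0) (((QD.G (J t ht)).dq h).dq h)
      (v2 t ht 0 (l2 t ht).1) ((dqdq_l2 (QD.G (J t ht)) h).trans
        (show _ ≤ H * (H * (25 * Real.sqrt K ^ 8 * K)) by
          have := gl2 t ht
          rw [← hH]; gcongr)) hX.cont0 (hX.2 0 (by norm_num))⟩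
  · intro B
    refine ⟨300 * (B * Real.sqrt K ^ 4) * K,
      fun X hX t ht => (b2 (J t ht) hX (h0 t ht) (h1 t ht)).trans ?_⟩
    have hB : 0 ≤ B := (abs_nonneg _).trans (hX.2 0 (by norm_num) 0)
    have := hK t ht
    gcongr
  · intro B
    exact ⟨_, fun X hX t ht =>
      bpow (J t ht) (hK t ht) (h0 t ht) hX.cont0 (hX.2 0 (by norm_num)) 8⟩
  · intro t ht
    exact ((((V t ht).1 0).mul ((V t ht).1 0)).const_mul _).add
      ((((J t ht).1 0).pow 6 (by norm_num)).const_mul _)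
  · intro t ht x
    have e1 := S.eq t (hsub t ht)
    have e2 := dq_time (dq_time e1 h) h x
    refine (((e2.mul e2).const_mul (1 / 2)).add
      (((e1 x).pow 6).const_mul (5 / 6 * β))).congr_deriv ?_
    unfold L4
    simp only [Dq]
    push_cast
    ring

theorem energy {β a b : ℝ} {U : ℝ → ℕ → ℝ → ℝ} (S : Sett β a b U) {c d K : ℝ} (hac : a ≤ c)
    (hcd : c ≤ d) (hdb : d ≤ b)
    (hK : ∀ t ∈ Icc c d, ∫ x, (U t 0 x ^ 2 + U t 1 x ^ 2 + U t 2 x ^ 2) ≤ K) :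
    ∫ x, (1 / 2 * U d 2 x ^ 2 + 5 / 6 * β * U d 0 x ^ 6) =
      ∫ x, (1 / 2 * U c 2 x ^ 2 + 5 / 6 * β * U c 0 x ^ 6) := by
  have hsub : ∀ t ∈ Icc c d, t ∈ Icc a b := fun t ht => ⟨hac.trans ht.1, ht.2.trans hdb⟩
  have J : ∀ t ∈ Icc c d, JT (U t) := fun t ht => S.jt t (hsub t ht)
  have L : ∀ t ∈ Icc c d, Tendsto (fun n => ∫ x, (1 / 2 * (Dq (hs n) (Dq (hs n) (U t 0)) x *
      Dq (hs n) (Dq (hs n) (U t 0)) x) + 5 / 6 * β * U t 0 x ^ 6)) atTop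
      (𝓝 (∫ x, (1 / 2 * U t 2 x ^ 2 + 5 / 6 * β * U t 0 x ^ 6))) := by
    intro t ht
    have q := (J t ht).1
    have dd := (J t ht).2
    have q6 := ((q 0).pow 6 (by norm_num)).const_mul (5 / 6 * β)
    have e : ∀ n, ∫ x, (1 / 2 * (Dq (hs n) (Dq (hs n) (U t 0)) x *
      Dq (hs n) (Dq (hs n) (U t 0)) x) + 5 / 6 * β * U t 0 x ^ 6) =
      1 / 2 * (∫ x, Dq (hs n) (Dq (hs n) (U t 0)) x * Dq (hs n) (Dq (hs n) (U t 0)) x)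
        + ∫ x, 5 / 6 * β * U t 0 x ^ 6 := by
      intro n
      have v := ((q 0).dq (hs n)).dq (hs n)
      rw [integral_add ((v.mul v).const_mul _).integrable q6.integrable, integral_const_mul]
    simp_rw [e]
    rw [integral_add (((q 2).pow 2 (by norm_num)).const_mul _).integrable q6.integrable]
    simp only [integral_const_mul]
    have := prodlim (q 0) (q 0) (q 2) (q 2) (dd 0) (dd 1) (dd 0) (dd 1)
    simp_rw [← sq] at this ⊢
    exact (this.const_mul _).add_const _
  have hc : c ∈ Icc c d := left_mem_Icc.2 hcd
  have hd : d ∈ Icc c d := right_mem_Icc.2 hcd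
  have lim1 := (L d hd).sub (L c hc)
  simp_rw [energy_h S hac hcd hdb hK] at lim1
  have lim2 : Tendsto (fun n => ∫ t in c..d, ∫ x, Fl β (hs n) U t x) atTop
      (𝓝 (∫ _ in c..d, (0 : ℝ))) := by
    refine intervalIntegral.tendsto_integral_filter_of_dominated_convergence
      (fun _ => |β| * (5 * (10 * Real.sqrt K ^ 4 * K +
        Real.sqrt K * ((K + 288 * Real.sqrt K ^ 6 * K) / 2))) +
      |β| * (300 * (1 * Real.sqrt K ^ 4) * K)) ?_ ?_ ?_ ?_
    · refine Eventually.of_forall fun n => ?_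
      exact ((Fl_cont S (hs n)).stronglyMeasurable.integral_prod_right).aestronglyMeasurable
    · refine Eventually.of_forall fun n => ae_of_all _ fun t ht => ?_
      rw [uIoc_of_le hcd] at ht
      have ht := Ioc_subset_Icc_self ht
      exact Fl_bound (J t ht) (hs_pos n) (hK t ht)
        (fun x => Real.abs_le_sqrt (sup01 (J t ht) (hK t ht) x).1)
        (fun x => Real.abs_le_sqrt (sup01 (J t ht) (hK t ht) x).2)
    · exact intervalIntegrable_const
    · refine ae_of_all _ fun t ht => ?_
      rw [uIoc_of_le hcd] at ht
      exact Fl_lim (J t (Ioc_subset_Icc_self ht))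
  rw [intervalIntegral.integral_zero] at lim2
  exact sub_eq_zero.1 (tendsto_nhds_unique lim1 lim2)

theorem closedN {β a b : ℝ} {U : ℝ → ℕ → ℝ → ℝ} (S : Sett β a b U) (K : ℝ) :
    IsClosed {t | t ∈ Icc a b ∧ ∫ x, (U t 0 x ^ 2 + U t 1 x ^ 2 + U t 2 x ^ 2) ≤ K} := by
  have C := S.cont
  have hc : Continuous (Function.uncurry fun t x => U t 0 x ^ 2 + U t 1 x ^ 2 + U t 2 x ^ 2) :=
    (((C 0).pow 2).add ((C 1).pow 2)).add ((C 2).pow 2)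
  have e : {t | t ∈ Icc a b ∧ ∫ x, (U t 0 x ^ 2 + U t 1 x ^ 2 + U t 2 x ^ 2) ≤ K} =
      Icc a b ∩ ⋂ m : ℕ, {t | ∫ x in (-(m : ℝ))..m,
        (U t 0 x ^ 2 + U t 1 x ^ 2 + U t 2 x ^ 2) ≤ K} := by
    ext t
    simp only [mem_ofPred_eq, mem_inter_iff, mem_iInter]
    refine and_congr_right fun ht => ?_
    have q := (S.jt t ht).1
    have I := ((q 0).sq_sum (q 1) (q 2)).integrable
    constructor
    · intro h m
      refine le_trans ?_ h
      rw [intervalIntegral.integral_of_le (by linarith [Nat.cast_nonneg (α := ℝ) m])]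
      exact setIntegral_le_integral I (ae_of_all _ fun x => by
        show (0 : ℝ) ≤ U t 0 x ^ 2 + U t 1 x ^ 2 + U t 2 x ^ 2
        positivity)
    · intro h
      exact le_of_tendsto (intervalIntegral_tendsto_integral I
        (tendsto_neg_atTop_atBot.comp tendsto_natCast_atTop_atTop)
        tendsto_natCast_atTop_atTop) (Eventually.of_forall h)
  rw [e]
  refine isClosed_Icc.inter (isClosed_iInter fun m => isClosed_le ?_ continuous_const)
  exact intervalIntegral.continuous_parametric_intervalIntegral_of_continuous' hc _ _

theorem bddN {β a b : ℝ} {U : ℝ → ℕ → ℝ → ℝ} (S : Sett β a b U) :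
    ∃ K, ∀ t ∈ Icc a b, ∫ x, (U t 0 x ^ 2 + U t 1 x ^ 2 + U t 2 x ^ 2) ≤ K := by
  refine baire_prop (fun t => ∫ x, (U t 0 x ^ 2 + U t 1 x ^ 2 + U t 2 x ^ 2)) a b (closedN S) ?_
  intro K
  obtain ⟨C, hC⟩ := gn' β K
  refine ⟨C, fun c d hac hcd hdb ⟨K', hK'⟩ s hs' t ht hs => ?_⟩
  have hsub : ∀ t ∈ Icc c d, t ∈ Icc a b := fun t ht => ⟨hac.trans ht.1, ht.2.trans hdb⟩
  have J : ∀ t ∈ Icc c d, JT (U t) := fun t ht => S.jt t (hsub t ht)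
  refine hC (U t) (U s) (J t ht) (J s hs') hs ?_ ?_
  · rcases le_total s t with h | h
    · exact mass S (hac.trans hs'.1) h (ht.2.trans hdb)
        (fun r hr => hK' r ⟨hs'.1.trans hr.1, hr.2.trans ht.2⟩)
    · exact (mass S (hac.trans ht.1) h (hs'.2.trans hdb)
        (fun r hr => hK' r ⟨ht.1.trans hr.1, hr.2.trans hs'.2⟩)).symm
  · rcases le_total s t with h | h
    · exact energy S (hac.trans hs'.1) h (ht.2.trans hdb)
        (fun r hr => hK' r ⟨hs'.1.trans hr.1, hr.2.trans ht.2⟩)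
    · exact (energy S (hac.trans ht.1) h (hs'.2.trans hdb)
        (fun r hr => hK' r ⟨ht.1.trans hr.1, hr.2.trans hs'.2⟩)).symm


/-- for a smooth rapidly decaying real solution of
`∂_t u - (1/5)∂_x^5 u = β ∂_x(u^5)` on a time interval, the energy
`E(t) = ∫ ((1/2)(∂_x² u)² + (5/6)β u^6) dx` is independent of `t`. -/
theorem energy_conservation (β a b : ℝ) (u : ℝ → ℝ → ℝ)
    (hu : ContDiff ℝ (⊤ : ℕ∞) (Function.uncurry u))
    (hdecay : ∀ t ∈ Set.Icc a b, ∀ k n : ℕ, ∃ C : ℝ, ∀ x : ℝ,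
      |x| ^ n * |iteratedDeriv k (fun y => u t y) x| ≤ C)
    (heq : ∀ t ∈ Set.Icc a b, ∀ x : ℝ,
      pt u t x - (1/5) * pxk 5 u t x = β * deriv (fun y => (u t y) ^ 5) x)
    (t₁ t₂ : ℝ) (h₁ : t₁ ∈ Set.Icc a b) (h₂ : t₂ ∈ Set.Icc a b) :
    ∫ x : ℝ, ((1/2) * (pxk 2 u t₁ x) ^ 2 + (5/6) * β * (u t₁ x) ^ 6)
      = ∫ x : ℝ, ((1/2) * (pxk 2 u t₂ x) ^ 2 + (5/6) * β * (u t₂ x) ^ 6) := by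
  have S := sett_of β a b u hu hdecay heq
  obtain ⟨K, hK⟩ := bddN S
  have key : ∀ c d, c ∈ Set.Icc a b → d ∈ Set.Icc a b → c ≤ d →
      ∫ x : ℝ, ((1/2) * (pxk 2 u d x) ^ 2 + (5/6) * β * (u d x) ^ 6)
        = ∫ x : ℝ, ((1/2) * (pxk 2 u c x) ^ 2 + (5/6) * β * (u c x) ^ 6) := by
    intro c d hc hd hcd
    have h := energy S hc.1 hcd hd.2 (fun t ht => hK t ⟨hc.1.trans ht.1, ht.2.trans hd.2⟩)
    simp only [iteratedDeriv_zero] at h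
    exact h
  rcases le_total t₁ t₂ with h | h
  · exact (key t₁ t₂ h₁ h₂ h).symm
  · exact key t₂ t₁ h₂ h₁ h
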